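/- arXiv:2111.10590 — 3 statements merged into one kernel-verified Lean document; each statement's English description precedes it below -/
import Mathlib

section
/- For every positive integer n with n ≠ 2, the number of partitions of n with more odd parts than even parts is strictly greater than the number of partitions of n with more even parts than odd parts; that is, p_o(n) > p_e(n). -/
/-- The number of odd parts of a partition, counted with multiplicity. -/
def Nat.Partition.oddCount {n : ℕ} (l : n.Partition) : ℕ :=
  (l.parts.filter (fun p => p % 2 = 1)).card

/-- The number of even parts of a partition, counted with multiplicity. -/
def Nat.Partition.evenCount {n : ℕ} (l : n.Partition) : ℕ :=
  (l.parts.filter (fun p => p % 2 = 0)).card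

/-!
Exchanging `2 * k - 1` and `2 * k` in a partition with `o` odd and `e` even parts, `o < e`, lowers
its sum by `e - o`; adding `e - o` parts equal to `1` makes up for it. The result has `o` even and
`2 * e - o` odd parts. These numbers determine `o` and `e`, so the map is injective, and its values
have an even number of parts. It therefore misses the partition `n` if `n` is odd, and
`(n - 2) + 1 + 1` if `n ≥ 4` is even.
-/

open Multiset

/-- The involution of `ℕ` exchanging `2 * k - 1` and `2 * k` for `k ≥ 1`. By truncated subtraction
it fixes `0`. -/
def swapParity (p : ℕ) : ℕ := if Even p then p - 1 else p + 1

lemma swapParity_involutive : Function.Involutive swapParity := by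
  intro p
  grind [swapParity]

lemma swapParity_ne_zero {p : ℕ} (hp : p ≠ 0) : swapParity p ≠ 0 := by
  grind [swapParity]

lemma even_swapParity_iff {p : ℕ} (hp : p ≠ 0) : Even (swapParity p) ↔ Odd p := by
  grind [swapParity]

lemma countP_even_add_countP_odd (s : Multiset ℕ) : s.countP Even + s.countP Odd = s.card := by
  simp only [s.card_eq_countP_add_countP Even, Nat.not_even_iff_odd]

lemma countP_even_map_swapParity {s : Multiset ℕ} (hs : 0 ∉ s) :
    (s.map swapParity).countP Even = s.countP Odd := by
  rw [countP_map, ← countP_eq_card_filter]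
  exact countP_congr rfl fun p hp =>
    propext (even_swapParity_iff (ne_of_mem_of_not_mem hp hs))

lemma sum_map_swapParity_add_countP_even {s : Multiset ℕ} (hs : 0 ∉ s) :
    (s.map swapParity).sum + s.countP Even = s.sum + s.countP Odd := by
  induction s using Multiset.induction with
  | empty => simp
  | cons p s ih =>
    obtain ⟨hp, hs⟩ : 0 ≠ p ∧ 0 ∉ s := by simpa using hs
    have hpar : swapParity p + (if Even p then 1 else 0) = p + if Odd p then 1 else 0 := by
      grind [swapParity]
    simp only [map_cons, sum_cons, countP_cons]
    linarith [ih hs]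

/-- The multiset obtained by swapping the parity of all entries and then restoring the sum by adding
ones. The sum is restored only if `s` has at least as many even as odd entries: otherwise the
truncated difference is `0`. -/
def swapParities (s : Multiset ℕ) : Multiset ℕ :=
  s.map swapParity + replicate (s.countP Even - s.countP Odd) 1

lemma zero_notMem_swapParities {s : Multiset ℕ} (hs : 0 ∉ s) : 0 ∉ swapParities s := by
  simp only [swapParities, mem_add, mem_map, mem_replicate, not_or, not_exists, not_and]
  exact ⟨fun p hp => swapParity_ne_zero (ne_of_mem_of_not_mem hp hs), by simp⟩

lemma sum_swapParities {s : Multiset ℕ} (hs : 0 ∉ s) (h : s.countP Odd ≤ s.countP Even) :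
    (swapParities s).sum = s.sum := by
  have hsum := sum_map_swapParity_add_countP_even hs
  simp only [swapParities, sum_add, sum_replicate, smul_eq_mul]
  omega

lemma card_swapParities {s : Multiset ℕ} (h : s.countP Odd ≤ s.countP Even) :
    (swapParities s).card = 2 * s.countP Even := by
  have hcard := countP_even_add_countP_odd s
  simp only [swapParities, card_add, card_map, card_replicate]
  omega

lemma countP_even_swapParities {s : Multiset ℕ} (hs : 0 ∉ s) :
    (swapParities s).countP Even = s.countP Odd := by
  have hones (k : ℕ) : (replicate k 1).countP Even = 0 := by
    simp [countP_eq_zero, mem_replicate]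
  rw [swapParities, countP_add, hones, add_zero, countP_even_map_swapParity hs]

lemma countP_even_lt_countP_odd_swapParities {s : Multiset ℕ} (hs : 0 ∉ s)
    (h : s.countP Odd < s.countP Even) :
    (swapParities s).countP Even < (swapParities s).countP Odd := by
  have hcard := card_swapParities h.le
  have heven := countP_even_swapParities hs
  have hadd := countP_even_add_countP_odd (swapParities s)
  omega

lemma swapParities_injOn :
    {s : Multiset ℕ | 0 ∉ s ∧ s.countP Odd ≤ s.countP Even}.InjOn swapParities := by
  rintro s ⟨hs, hle_s⟩ t ⟨ht, hle_t⟩ h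
  have heven : s.countP Even = t.countP Even := by
    have := congrArg card h
    rw [card_swapParities hle_s, card_swapParities hle_t] at this
    omega
  have hodd : s.countP Odd = t.countP Odd := by
    rw [← countP_even_swapParities hs, h, countP_even_swapParities ht]
  rw [swapParities, swapParities, heven, hodd] at h
  exact map_injective swapParity_involutive.injective (add_right_cancel h)

section Partition

variable {n : ℕ}

lemma zero_notMem_parts (l : n.Partition) : 0 ∉ l.parts :=
  fun h => (l.parts_pos h).false

lemma evenCount_eq_countP (l : n.Partition) : l.evenCount = l.parts.countP Even := by
  simp only [Nat.Partition.evenCount, countP_eq_card_filter, Nat.even_iff]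

lemma oddCount_eq_countP (l : n.Partition) : l.oddCount = l.parts.countP Odd := by
  simp only [Nat.Partition.oddCount, countP_eq_card_filter, Nat.odd_iff]

lemma countP_odd_parts_lt_countP_even_parts {l : n.Partition} (h : l.oddCount < l.evenCount) :
    l.parts.countP Odd < l.parts.countP Even := by
  rwa [← oddCount_eq_countP, ← evenCount_eq_countP]

/-- `swapParities` as a map from the partitions with more even than odd parts to those with more odd
than even parts. -/
def swapPartition (l : {l : n.Partition // l.oddCount < l.evenCount}) :
    {l : n.Partition // l.evenCount < l.oddCount} where
  val :=
    { parts := swapParities l.1.parts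
      parts_pos := fun hp => Nat.pos_of_ne_zero <|
        ne_of_mem_of_not_mem hp (zero_notMem_swapParities (zero_notMem_parts l.1))
      parts_sum := (sum_swapParities (zero_notMem_parts l.1)
        (countP_odd_parts_lt_countP_even_parts l.2).le).trans l.1.parts_sum }
  property := by
    simp only [evenCount_eq_countP, oddCount_eq_countP]
    exact countP_even_lt_countP_odd_swapParities (zero_notMem_parts l.1)
      (countP_odd_parts_lt_countP_even_parts l.2)

lemma swapPartition_injective : Function.Injective (swapPartition (n := n)) := by
  intro l m h
  have hparts : swapParities l.1.parts = swapParities m.1.parts := congrArg (·.1.parts) h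
  exact Subtype.ext <| Nat.Partition.ext <| swapParities_injOn
    ⟨zero_notMem_parts l.1, (countP_odd_parts_lt_countP_even_parts l.2).le⟩
    ⟨zero_notMem_parts m.1, (countP_odd_parts_lt_countP_even_parts m.2).le⟩ hparts

lemma even_card_parts_swapPartition (l : {l : n.Partition // l.oddCount < l.evenCount}) :
    Even (swapPartition l).1.parts.card :=
  even_iff_exists_two_mul.2 ⟨_, card_swapParities (countP_odd_parts_lt_countP_even_parts l.2).le⟩

lemma exists_evenCount_lt_oddCount_and_odd_card (hn : 0 < n) (hn2 : n ≠ 2) :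
    ∃ l : n.Partition, l.evenCount < l.oddCount ∧ Odd l.parts.card := by
  simp only [evenCount_eq_countP, oddCount_eq_countP]
  rcases n.even_or_odd with heven | hodd
  · have hsub : Even (n - 2) := by grind
    refine ⟨⟨{n - 2, 1, 1}, ?_, ?_⟩, ?_, ?_⟩
    · simp only [insert_eq_cons, mem_cons, mem_singleton]
      grind
    · simp only [insert_eq_cons, sum_cons, sum_singleton]
      grind
    · simp [insert_eq_cons, ← cons_zero, hsub]
    · simp [Nat.odd_iff]
  · refine ⟨.indiscrete n, ?_, ?_⟩ <;>
      simp [Nat.Partition.indiscrete_parts hn.ne', ← cons_zero, hodd]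

end Partition

/-- For every positive integer `n ≠ 2`, the number of partitions of `n` with more odd
parts than even parts exceeds the number of partitions of `n` with more even parts
than odd parts. -/
theorem po_gt_pe (n : ℕ) (hn : 0 < n) (hn2 : n ≠ 2) :
    Nat.card {l : n.Partition // l.evenCount < l.oddCount} >
      Nat.card {l : n.Partition // l.oddCount < l.evenCount} := by
  obtain ⟨l, hl, hodd⟩ := exists_evenCount_lt_oddCount_and_odd_card hn hn2
  have hmissed : ⟨l, hl⟩ ∉ Set.range (swapPartition (n := n)) := by
    rintro ⟨m, hm⟩
    have heven := even_card_parts_swapPartition m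
    rw [hm] at heven
    exact Nat.not_even_iff_odd.2 hodd heven
  simp only [Nat.card_eq_fintype_card]
  exact Fintype.card_lt_of_injective_of_notMem swapPartition swapPartition_injective hmissed
end

section
/- For every integer n > 19, the number of partitions of n into distinct parts with more odd parts than even parts is strictly greater than the number of partitions of n into distinct parts with more even parts than odd parts; that is, d_o(n) > d_e(n). -/
/-!
Let `y = X ^ 2`. Peel the parts `1` and `2` off a partition into distinct parts. If `a` odd and `b`
even parts are left, these are counted by a series `pairGF a b`, and `pairGF b a` equals
`X ^ (a - b) * pairGF a b` for `b < a`. Hence in the generating function of the difference the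
terms `(a, b)` and `(b, a)` add up to `(1 + X) (1 + y) (1 - X ^ (a - b)) pairGF a b`, whose
coefficients are nonnegative, and `(b, b)` contributes `(X - X ^ 2) pairGF b b`.

To absorb the negative terms `X ^ 2 pairGF b b`, split the other terms by the parity of the exponent
and arrange them by antidiagonals. Those with `a + b ∈ {2 b₀ - 1, 2 b₀, 2 b₀ + 1}` dominate the
negative term of `b₀` whenever `b₀ ≥ 2`: each antidiagonal telescopes to a few products of two
partition series, which leaves a polynomial inequality for `b₀ ≥ 24` and a finite check of
numerators below that. For `b₀ = 1` only finitely many low coefficients stay negative, and the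
surplus `X ^ 8 / (1 - y) + X ^ 21 / (1 - y)` makes all coefficients from `X ^ 20` on positive.
-/

namespace ParityBias

open PowerSeries Finset

section OrderedRing

variable {A : Type*} [CommRing A] [PartialOrder A] [IsOrderedRing A] {y F : A}

lemma one_sub_pow_mul_nonneg (hy : 0 ≤ y) (hF : 0 ≤ (1 - y) * F) (n : ℕ) :
    0 ≤ (1 - y ^ n) * F := by
  rw [← geom_sum_mul_neg, mul_assoc]
  exact mul_nonneg (sum_nonneg fun i _ => pow_nonneg hy i) hF

lemma pow_mul_le_pow_mul (hy : 0 ≤ y) (hF : 0 ≤ (1 - y) * F) {m n : ℕ} (hmn : m ≤ n) :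
    y ^ n * F ≤ y ^ m * F := by
  obtain ⟨k, rfl⟩ := Nat.exists_eq_add_of_le hmn
  linear_combination y ^ m * one_sub_pow_mul_nonneg hy hF k

lemma one_sub_mul_one_sub_pow_mul_nonneg (hy : 0 ≤ y) (hF : 0 ≤ (1 - y) * ((1 - y) * F)) (n : ℕ) :
    0 ≤ (1 - y) * ((1 - y ^ n) * F) :=
  (one_sub_pow_mul_nonneg hy hF n).trans_eq (mul_left_comm _ _ _)

lemma one_sub_pow_mul_le (hy : 0 ≤ y) (hF : 0 ≤ (1 - y) * ((1 - y) * F)) (n : ℕ) :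
    (1 - y ^ n) * F ≤ n * ((1 - y) * F) := by
  rw [← geom_sum_mul_neg, mul_assoc, sum_mul, ← nsmul_eq_mul]
  refine (sum_le_card_nsmul (range n) _ ((1 - y) * F) fun i _ => ?_).trans_eq (by rw [card_range])
  simpa using pow_mul_le_pow_mul hy hF i.zero_le

lemma natCast_mul_pow_mul_le (hy : 0 ≤ y) {m n : ℕ} (hmn : m ≤ n)
    (hF : ∀ j, n - m < j → j ≤ n → 0 ≤ (1 - y) * ((1 - y ^ j) * F)) :
    m * (y ^ n * ((1 - y) * F)) ≤ (1 - y ^ m) * F := by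
  rw [← geom_sum_mul_neg, mul_assoc, sum_mul, ← nsmul_eq_mul]
  refine (congrArg (· • _) (card_range m).symm).trans_le
    (card_nsmul_le_sum _ _ (y ^ n * ((1 - y) * F)) fun i hi => ?_)
  rw [mem_range] at hi
  obtain ⟨k, rfl⟩ := Nat.exists_eq_add_of_le (hi.le.trans hmn)
  linear_combination y ^ i * hF k (by omega) (by omega)

lemma one_sub_pow_two_mul_mul_le (hy : 0 ≤ y) {m : ℕ} (hm : 1 ≤ m)
    (hF : 0 ≤ (1 - y) * ((1 - y ^ m) * F)) :
    (1 - y ^ (2 * m)) * F ≤ (1 + y) * ((1 - y ^ m) * F) := by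
  obtain ⟨r, rfl⟩ := Nat.exists_eq_add_of_le' hm
  linear_combination y * one_sub_pow_mul_nonneg hy hF r

lemma two_mul_natCast_mul_pow_mul_le (hy : 0 ≤ y) {m : ℕ} (hm : 1 ≤ m)
    (hF : ∀ j, m ≤ j → j ≤ 2 * m → 0 ≤ (1 - y) * ((1 - y ^ j) * F)) :
    2 * m * (y ^ (2 * m) * ((1 - y) * F)) ≤ (1 + y) * ((1 - y ^ m) * F) := by
  have heven := natCast_mul_pow_mul_le hy (show m ≤ 2 * m by omega) fun j h₁ h₂ =>
    hF j (by omega) h₂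
  have hodd := natCast_mul_pow_mul_le hy (show m ≤ 2 * m - 1 by omega) fun j h₁ h₂ =>
    hF j (by omega) (by omega)
  have hpow : y ^ (2 * m) = y * y ^ (2 * m - 1) := (mul_pow_sub_one (by omega) y).symm
  linear_combination heven + y * hodd + m * ((1 - y) * F) * hpow

-- At `y = 1` the quotient of `(1 + y) (1 - y ^ (k / 2))` by `1 - y ^ k` is `1` for even `k` and
-- `(k - 1) / k` for odd `k`.
lemma natCast_mul_one_sub_pow_mul_le (hy : 0 ≤ y) {k p q : ℕ} (hk : 2 ≤ k) (hpq : p ≤ q)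
    (hratio : k % 2 = 0 ∨ p ≤ (k - 1) * (q - p)) (hF : 0 ≤ (1 - y) * F)
    (hF₂ : ∀ j, k / 2 ≤ j → j < k → 0 ≤ (1 - y) * ((1 - y ^ j) * F)) :
    p * ((1 - y ^ k) * F) ≤ q * ((1 + y) * ((1 - y ^ (k / 2)) * F)) := by
  obtain ⟨d, rfl⟩ := Nat.exists_eq_add_of_le hpq
  have hdouble := mul_le_mul_of_nonneg_left (one_sub_pow_two_mul_mul_le hy (m := k / 2) (by omega)
    (hF₂ _ le_rfl (by omega))) (Nat.cast_nonneg (α := A) p)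
  rcases k.mod_two_eq_zero_or_one with hk₂ | hk₂
  · have hd : 0 ≤ (d : A) * ((1 + y) * ((1 - y ^ (k / 2)) * F)) :=
      mul_nonneg d.cast_nonneg
        (mul_nonneg (add_nonneg zero_le_one hy) (one_sub_pow_mul_nonneg hy hF _))
    rw [show 2 * (k / 2) = k by omega] at hdouble
    push_cast
    linear_combination hdouble + hd
  · obtain ⟨m, rfl⟩ : ∃ m, k = 2 * m + 1 := ⟨k / 2, by omega⟩
    rw [show (2 * m + 1) / 2 = m by omega] at *
    have hpd : (p : A) ≤ 2 * m * d := by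
      have := hratio.resolve_left (by omega)
      rw [Nat.add_sub_cancel_left, Nat.add_sub_cancel] at this
      exact_mod_cast Nat.mono_cast (α := A) this
    have hlast := mul_le_mul_of_nonneg_right hpd (mul_nonneg (pow_nonneg hy (2 * m)) hF)
    have hgain := two_mul_natCast_mul_pow_mul_le hy (by omega : 1 ≤ m) fun j h₁ h₂ =>
      hF₂ j h₁ (by omega)
    push_cast
    linear_combination hdouble + hlast + (d : A) * hgain

end OrderedRing

section Polynomials

variable {A : Type*} [CommRing A] [PartialOrder A] [IsOrderedRing A] [Nontrivial A] {y z h F : A}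

lemma sextic_mul_le_quadratic_mul (hy : 0 ≤ y) (hz : 0 ≤ z) (hh : 1 + y * z ≤ h) (hF : 0 ≤ F)
    (hzF : 0 ≤ (1 - z) * F) :
    (10 * (1 - z) ^ 2 - 3 * y ^ 2 * z - 12 * y ^ 2 * (1 - y ^ 2) * z ^ 2 -
      12 * y ^ 4 * (1 - y) * z ^ 3 + 15 * y ^ 5 * z ^ 3 - 12 * y ^ 5 * z ^ 4 +
      30 * y ^ 6 * z ^ 4) * F ≤
    (10 * (1 - z) ^ 2 + 12 * y ^ 2 * z * (1 - z) + 12 * y ^ 4 * z ^ 2 * (1 - z) * h +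
      15 * y ^ 5 * z ^ 3 * h ^ 2 - 15 * y ^ 2 * z) * F := by
  have hsq : 1 + 2 * (y * z) ≤ h ^ 2 := by
    have hyz : 0 ≤ (y * z) ^ 2 := by positivity
    linear_combination pow_le_pow_left₀ (by positivity : 0 ≤ 1 + y * z) hh 2 + hyz
  have hlinear : 0 ≤ y ^ 4 * z ^ 2 * ((h - (1 + y * z)) * ((1 - z) * F)) :=
    mul_nonneg (by positivity) (mul_nonneg (sub_nonneg.2 hh) hzF)
  have hsquare : 0 ≤ y ^ 5 * z ^ 3 * ((h ^ 2 - (1 + 2 * (y * z))) * F) :=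
    mul_nonneg (by positivity) (mul_nonneg (sub_nonneg.2 hsq) hF)
  linear_combination 12 * hlinear + 15 * hsquare

-- The coefficients on the left are the limits for `y = 1`; the differences are multiples of
-- `1 - y`, which `hyz` trades for `1 - z`.
lemma quartic_mul_le_sextic_mul (hy : 0 ≤ y) (hz : 0 ≤ z) (hF : 0 ≤ F) (hyF : 0 ≤ (1 - y) * F)
    (hyyF : 0 ≤ (1 - y) * ((1 - y) * F)) (hyz : 24 * (z * ((1 - y) * F)) ≤ (1 - z) * F) :
    (10 - 24 * z + 7 * z ^ 2 + 18 * z ^ 3 + z ^ 4) * F ≤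
      (10 * (1 - z) ^ 2 - 3 * y ^ 2 * z - 12 * y ^ 2 * (1 - y ^ 2) * z ^ 2 -
        12 * y ^ 4 * (1 - y) * z ^ 3 + 15 * y ^ 5 * z ^ 3 - 12 * y ^ 5 * z ^ 4 +
        30 * y ^ 6 * z ^ 4) * F := by
  have hz_mul (n : ℕ) {f g : A} (hfg : f ≤ g) : z ^ n * f ≤ z ^ n * g :=
    mul_le_mul_of_nonneg_left hfg (pow_nonneg hz n)
  have hpow (n : ℕ) : y ^ n * ((1 - y) * F) ≤ (1 - y) * F := by
    simpa using pow_mul_le_pow_mul hy hyyF n.zero_le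
  have hone : 0 ≤ (1 - y ^ 2) * F := one_sub_pow_mul_nonneg hy hyF 2
  have htwo : y ^ 2 * ((1 - y ^ 2) * F) ≤ 2 * ((1 - y) * F) := by
    linear_combination hpow 2 + hpow 3
  have hfive : (1 - y ^ 5) * F ≤ 5 * ((1 - y) * F) := by
    exact_mod_cast one_sub_pow_mul_le hy hyyF 5
  have hrest : 0 ≤ y ^ 6 * z ^ 4 * F := by positivity
  linear_combination 3 * z * hone + 12 * hz_mul 2 htwo + 15 * hz_mul 3 hfive +
    12 * hz_mul 3 (hpow 4) + 12 * hz_mul 4 (hpow 5) + 18 * hrest + z * hyz + 4 * hz_mul 2 hyz +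
    hz_mul 3 hyz + 9 * hz_mul 3 hyF + 12 * hz_mul 4 hyF

lemma quartic_mul_nonneg (hz : 0 ≤ z) (hF : 0 ≤ F) (hzF : 0 ≤ (1 - z) * F)
    (hzF₂ : 0 ≤ (1 - z) ^ 2 * F) (hzF₄ : 0 ≤ (1 - z) ^ 4 * F) :
    0 ≤ (10 - 24 * z + 7 * z ^ 2 + 18 * z ^ 3 + z ^ 4) * F := by
  have hweight : 0 ≤ 10 + 16 * z + 11 * z ^ 2 := by positivity
  have hrest : 0 ≤ (z ^ 4 + 11 * z ^ 5) * F := by positivity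
  linear_combination mul_nonneg hweight hzF₄ + 6 * z ^ 3 * hzF₂ + 11 * z ^ 5 * hzF + hrest

end Polynomials

section CoefficientOrder

-- Power series are compared coefficientwise throughout.
scoped instance : PartialOrder ℤ⟦X⟧ :=
  { le f g := ∀ n, coeff n f ≤ coeff n g
    le_refl _ _ := le_rfl
    le_trans _ _ _ h₁ h₂ n := (h₁ n).trans (h₂ n)
    le_antisymm _ _ h₁ h₂ := PowerSeries.ext fun n => (h₁ n).antisymm (h₂ n) }

lemma nonneg_iff {f : ℤ⟦X⟧} : 0 ≤ f ↔ ∀ n, 0 ≤ coeff n f :=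
  forall_congr' fun n => by rw [map_zero]

scoped instance : IsOrderedRing ℤ⟦X⟧ :=
  have : IsOrderedAddMonoid ℤ⟦X⟧ :=
    { add_le_add_left _ _ h _ n := by simpa using h n }
  have : ZeroLEOneClass ℤ⟦X⟧ := ⟨nonneg_iff.2 fun n => by rw [coeff_one]; split_ifs <;> simp⟩
  .of_mul_nonneg fun f g hf hg => nonneg_iff.2 fun n => by
    rw [coeff_mul]
    exact sum_nonneg fun p _ => mul_nonneg (nonneg_iff.1 hf p.1) (nonneg_iff.1 hg p.2)

lemma X_nonneg : (0 : ℤ⟦X⟧) ≤ X :=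
  nonneg_iff.2 fun n => by rw [coeff_X]; split_ifs <;> simp

end CoefficientOrder

/-- The variable `y = X ^ 2` which marks half the size of an even part. -/
noncomputable def y : ℤ⟦X⟧ := X ^ 2

lemma y_nonneg : 0 ≤ y := pow_nonneg X_nonneg 2

lemma y_pow (n : ℕ) : y ^ n = X ^ (2 * n) := (pow_mul X 2 n).symm

/-- The geometric series `1 / (1 - y ^ j)`. -/
noncomputable def geomY (j : ℕ) : ℤ⟦X⟧ := PowerSeries.mk fun n => if 2 * j ∣ n then 1 else 0

lemma geomY_nonneg (j : ℕ) : 0 ≤ geomY j :=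
  nonneg_iff.2 fun n => by rw [geomY, coeff_mk]; split_ifs <;> simp

lemma one_sub_mul_geomY {j : ℕ} (hj : 1 ≤ j) : (1 - y ^ j) * geomY j = 1 := by
  have h2j : 2 * j ≠ 0 := by omega
  have hgeom : geomY j = expand (2 * j) h2j (mk 1) := by
    ext n
    simp only [geomY, coeff_mk, coeff_expand, Pi.one_apply]
  rw [hgeom, y_pow, ← expand_X (2 * j) h2j, ← map_one (expand (2 * j) h2j), ← map_sub, ← map_mul,
    mul_comm (1 - X), mk_one_mul_one_sub_eq_one]

/-- The series `1 / ((1 - y) ⋯ (1 - y ^ a))`, which counts the partitions into at most `a` even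
parts. -/
noncomputable def evenGF (a : ℕ) : ℤ⟦X⟧ := ∏ j ∈ Icc 1 a, geomY j

lemma evenGF_nonneg (a : ℕ) : 0 ≤ evenGF a := prod_nonneg fun j _ => geomY_nonneg j

lemma evenGF_zero : evenGF 0 = 1 := rfl

lemma evenGF_succ (a : ℕ) : evenGF (a + 1) = evenGF a * geomY (a + 1) :=
  prod_Icc_succ_top (by omega) _

lemma one_sub_mul_evenGF_succ (a : ℕ) : (1 - y ^ (a + 1)) * evenGF (a + 1) = evenGF a := by
  rw [evenGF_succ, mul_left_comm, one_sub_mul_geomY (by omega), mul_one]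

lemma prod_one_sub_mul_evenGF_nonneg {a : ℕ} {s : Finset ℕ} (hs : s ⊆ Icc 1 a) :
    0 ≤ (∏ j ∈ s, (1 - y ^ j)) * evenGF a := by
  have hcancel : ∏ j ∈ s, (1 - y ^ j) * geomY j = 1 :=
    prod_eq_one fun j hj => one_sub_mul_geomY (mem_Icc.1 (hs hj)).1
  rw [evenGF, ← prod_sdiff hs, mul_left_comm, ← prod_mul_distrib, hcancel, mul_one]
  exact prod_nonneg fun j _ => geomY_nonneg j

lemma one_sub_mul_evenGF_nonneg {a : ℕ} (ha : 1 ≤ a) : 0 ≤ (1 - y) * evenGF a := by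
  simpa using prod_one_sub_mul_evenGF_nonneg (singleton_subset_iff.2 (mem_Icc.2 ⟨le_rfl, ha⟩))

lemma one_sub_mul_evenGF_mul_nonneg {a : ℕ} (ha : 1 ≤ a) (b : ℕ) :
    0 ≤ (1 - y) * (evenGF a * evenGF b) := by
  rw [← mul_assoc]
  exact mul_nonneg (one_sub_mul_evenGF_nonneg ha) (evenGF_nonneg b)

lemma one_sub_mul_one_sub_mul_evenGF_mul_nonneg {a b : ℕ} (ha : 1 ≤ a) (hb : 1 ≤ b) :
    0 ≤ (1 - y) * ((1 - y) * (evenGF a * evenGF b)) :=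
  (mul_nonneg (one_sub_mul_evenGF_nonneg ha) (one_sub_mul_evenGF_nonneg hb)).trans_eq (by ring)

lemma one_sub_mul_one_sub_pow_mul_evenGF_mul_nonneg {a b j : ℕ} (hj : 1 ≤ j) (hja : j ≤ a)
    (hb : j = 1 → 1 ≤ b) : 0 ≤ (1 - y) * ((1 - y ^ j) * (evenGF a * evenGF b)) := by
  rcases hj.eq_or_lt with rfl | hj
  · simpa using one_sub_mul_one_sub_mul_evenGF_mul_nonneg hja (hb rfl)
  · have hs : ({1, j} : Finset ℕ) ⊆ Icc 1 a := by
      intro i; simp only [mem_insert, mem_singleton, mem_Icc]; omega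
    have h := mul_nonneg (prod_one_sub_mul_evenGF_nonneg hs) (evenGF_nonneg b)
    rw [prod_pair (by omega)] at h
    exact h.trans_eq (by ring)

lemma one_add_pow_le_geomY {j : ℕ} (hj : 1 ≤ j) : 1 + y ^ j ≤ geomY j := by
  have h := mul_nonneg (pow_nonneg y_nonneg (2 * j)) (geomY_nonneg j)
  linear_combination h - (1 + y ^ j) * one_sub_mul_geomY hj

/-! ### Certificates of nonnegativity -/

lemma prod_map_one_sub_mul_evenGF_mul_nonneg {a b : ℕ} {s : Multiset ℕ}
    (hs : s ≤ (Icc 1 a).val + (Icc 1 b).val) :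
    0 ≤ (s.map fun j => 1 - y ^ j).prod * (evenGF a * evenGF b) := by
  have hfactor {n : ℕ} {t : Multiset ℕ} (ht : t ≤ (Icc 1 n).val) :
      0 ≤ (t.map fun j => 1 - y ^ j).prod * evenGF n :=
    prod_one_sub_mul_evenGF_nonneg (s := ⟨t, Multiset.nodup_of_le ht (Icc 1 n).nodup⟩)
      (val_le_iff.1 ht)
  have h := mul_nonneg (hfactor (s.inter_le_right (t := (Icc 1 a).val)))
    (hfactor (Multiset.sub_le_iff_le_add'.2 hs))
  rw [mul_mul_mul_comm, ← Multiset.prod_add, ← Multiset.map_add, add_comm,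
    Multiset.sub_add_inter] at h
  exact h

/-- The polynomial in `y` with the given list of coefficients, constant term first. -/
noncomputable def evalList (p : List ℤ) : ℤ⟦X⟧ := p.foldr (fun a f => a + y * f) 0

lemma evalList_nil : evalList [] = 0 := rfl

lemma evalList_cons (a : ℤ) (p : List ℤ) : evalList (a :: p) = a + y * evalList p := rfl

lemma evalList_append (p q : List ℤ) :
    evalList (p ++ q) = evalList p + y ^ p.length * evalList q := by
  induction p with
  | nil => simp [evalList_nil]
  | cons a p ih => rw [List.cons_append, evalList_cons, ih, evalList_cons, List.length_cons]; ring

lemma evalList_replicate_zero (n : ℕ) : evalList (List.replicate n 0) = 0 := by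
  induction n with
  | zero => rfl
  | succ n ih => rw [List.replicate_succ, evalList_cons, ih]; simp

lemma evalList_map_neg (p : List ℤ) : evalList (p.map Neg.neg) = -evalList p := by
  induction p with
  | nil => simp [evalList_nil]
  | cons a p ih => rw [List.map_cons, evalList_cons, ih, evalList_cons]; push_cast; ring

lemma evalList_nonneg {p : List ℤ} (hp : ∀ a ∈ p, 0 ≤ a) : 0 ≤ evalList p := by
  induction p with
  | nil => exact le_rfl
  | cons a p ih =>
    rw [List.forall_mem_cons] at hp
    obtain ⟨n, rfl⟩ := Int.eq_ofNat_of_zero_le hp.1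
    exact add_nonneg (by exact_mod_cast n.cast_nonneg) (mul_nonneg y_nonneg (ih hp.2))

/-- Addition of coefficient lists. -/
def addList : List ℤ → List ℤ → List ℤ
  | [], q => q
  | p, [] => p
  | a :: p, b :: q => (a + b) :: addList p q

lemma evalList_addList (p q : List ℤ) : evalList (addList p q) = evalList p + evalList q := by
  induction p generalizing q with
  | nil => rw [addList, evalList_nil, zero_add]
  | cons a p ih =>
    cases q with
    | nil => rw [addList.eq_2, evalList_nil, add_zero]; simp
    | cons b q => rw [addList, evalList_cons, ih, evalList_cons, evalList_cons]; push_cast; ring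

/-- Multiplication of a coefficient list by `1 - y ^ k`. -/
def mulOneSub (k : ℕ) (p : List ℤ) : List ℤ :=
  addList p (List.replicate k 0 ++ p.map Neg.neg)

lemma evalList_mulOneSub (k : ℕ) (p : List ℤ) :
    evalList (mulOneSub k p) = (1 - y ^ k) * evalList p := by
  rw [mulOneSub, evalList_addList, evalList_append, evalList_replicate_zero, evalList_map_neg,
    List.length_replicate]
  ring

/-- Division of a coefficient list `p` by `1 - y ^ k`: returns the first `p.length` coefficients of
the quotient and the remainder. The second argument holds the last `k` coefficients found. -/
def divOneSub : List ℤ → List ℤ → List ℤ × List ℤ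
  | [], r => ([], r)
  | a :: p, r =>
    let c := a + r.headD 0
    let d := divOneSub p (r.tail ++ [c])
    (c :: d.1, d.2)

lemma evalList_divOneSub (p : List ℤ) {r : List ℤ} (hr : r ≠ []) :
    evalList p + evalList r = (1 - y ^ r.length) * evalList (divOneSub p r).1 +
      y ^ p.length * evalList (divOneSub p r).2 := by
  induction p generalizing r with
  | nil => simp [divOneSub, evalList_nil]
  | cons a p ih =>
    obtain ⟨b, r, rfl⟩ := List.exists_cons_of_ne_nil hr
    have h := ih (r := r ++ [a + b]) (by simp)
    simp only [evalList_append, evalList_cons, evalList_nil, List.length_append,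
      List.length_singleton] at h
    simp only [divOneSub, List.headD_cons, List.tail_cons, evalList_cons, List.length_cons]
    push_cast at h ⊢
    linear_combination y * h

/-- Searches for a proof that the polynomial with coefficients `p` becomes a series with nonnegative
coefficients after division by products of the `1 - y ^ k`, where `k` runs over the list. -/
def checkNonneg : List ℕ → List ℤ → Bool
  | [], p => p.all (0 ≤ ·)
  | k :: ks, p =>
    let d := divOneSub p (List.replicate k 0)
    checkNonneg ks d.1 && checkNonneg ks d.2

lemma evalList_mul_nonneg_of_checkNonneg {ks : List ℕ} {p : List ℤ} {F : ℤ⟦X⟧}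
    (hks : 0 ∉ ks) (hF : ∀ s ≤ (ks : Multiset ℕ), 0 ≤ (s.map fun j => 1 - y ^ j).prod * F)
    (hp : checkNonneg ks p) : 0 ≤ evalList p * F := by
  induction ks generalizing p F with
  | nil =>
    refine mul_nonneg (evalList_nonneg ?_) (by simpa using hF 0 (by simp))
    simpa [checkNonneg] using hp
  | cons k ks ih =>
    rw [checkNonneg, Bool.and_eq_true] at hp
    rw [List.mem_cons, not_or] at hks
    have hquot := ih (F := (1 - y ^ k) * F) hks.2 (fun s hs => by
      have h := hF (k ::ₘ s) (by rw [← Multiset.cons_coe]; exact (Multiset.cons_le_cons_iff k).2 hs)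
      rw [Multiset.map_cons, Multiset.prod_cons] at h
      exact h.trans_eq (by ring)) hp.1
    have hrem := ih hks.2 (fun s hs => hF s (hs.trans (by
      rw [← Multiset.cons_coe]; exact Multiset.le_cons_self _ k))) hp.2
    have hdiv := evalList_divOneSub p (r := List.replicate k 0) (by simpa using hks.1 ∘ Eq.symm)
    rw [evalList_replicate_zero, add_zero, List.length_replicate] at hdiv
    rw [hdiv]
    exact (add_nonneg hquot (mul_nonneg (pow_nonneg y_nonneg p.length) hrem)).trans_eq (by ring)

/-- The term `coeff * y ^ exponent * (evenGF a * evenGF b)` of a linear combination. -/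
structure PairTerm where
  (coeff : ℤ) (exponent a b : ℕ)

namespace PairTerm

/-- The power series a `PairTerm` stands for. -/
noncomputable def series (t : PairTerm) : ℤ⟦X⟧ :=
  t.coeff * (y ^ t.exponent * (evenGF t.a * evenGF t.b))

/-- The coefficients of the numerator of `t.series` over the denominator of `evenGF N ^ 2`. -/
def numerator (N : ℕ) (t : PairTerm) : List ℤ :=
  (List.range' (t.a + 1) (N - t.a) ++ List.range' (t.b + 1) (N - t.b)).foldr mulOneSub
    (List.replicate t.exponent 0 ++ [t.coeff])

end PairTerm

lemma evalList_foldr_mulOneSub (ks : List ℕ) (p : List ℤ) :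
    evalList (ks.foldr mulOneSub p) = (ks.map fun k => 1 - y ^ k).prod * evalList p := by
  induction ks with
  | nil => simp
  | cons k ks ih =>
    rw [List.foldr_cons, evalList_mulOneSub, ih, List.map_cons, List.prod_cons, mul_assoc]

lemma prod_range'_mul_evenGF (a n : ℕ) :
    ((List.range' (a + 1) n).map fun k => 1 - y ^ k).prod * evenGF (a + n) = evenGF a := by
  induction n with
  | zero => simp
  | succ n ih =>
    rw [List.range'_1_concat, List.map_append, List.prod_append, List.map_singleton,
      List.prod_singleton, mul_assoc, ← add_assoc, add_right_comm a 1 n, one_sub_mul_evenGF_succ,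
      ih]

lemma PairTerm.evalList_numerator_mul {N : ℕ} {t : PairTerm} (ha : t.a ≤ N) (hb : t.b ≤ N) :
    evalList (t.numerator N) * (evenGF N * evenGF N) = t.series := by
  have hprod_a := prod_range'_mul_evenGF t.a (N - t.a)
  have hprod_b := prod_range'_mul_evenGF t.b (N - t.b)
  rw [Nat.add_sub_cancel' ha] at hprod_a
  rw [Nat.add_sub_cancel' hb] at hprod_b
  rw [numerator, evalList_foldr_mulOneSub, List.map_append, List.prod_append, evalList_append,
    evalList_replicate_zero, List.length_replicate, evalList_cons, evalList_nil, series, ← hprod_a,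
    ← hprod_b]
  ring

/-- The power series a list of `PairTerm`s stands for. -/
noncomputable def pairSum (ts : List PairTerm) : ℤ⟦X⟧ := (ts.map PairTerm.series).sum

/-- The numerator of `pairSum ts` over the denominator of `evenGF N ^ 2`. -/
def numeratorSum (N : ℕ) (ts : List PairTerm) : List ℤ :=
  (ts.map (PairTerm.numerator N)).foldr addList []

lemma evalList_numeratorSum_mul {N : ℕ} {ts : List PairTerm} (hts : ∀ t ∈ ts, t.a ≤ N ∧ t.b ≤ N) :
    evalList (numeratorSum N ts) * (evenGF N * evenGF N) = pairSum ts := by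
  induction ts with
  | nil => simp [numeratorSum, pairSum, evalList_nil]
  | cons t ts ih =>
    rw [List.forall_mem_cons] at hts
    rw [numeratorSum, List.map_cons, List.foldr_cons, evalList_addList, add_mul,
      t.evalList_numerator_mul hts.1.1 hts.1.2, pairSum, List.map_cons, List.sum_cons,
      ← pairSum, ← ih hts.2, numeratorSum]

lemma pairSum_nonneg {N pad : ℕ} {ks : List ℕ} {ts : List PairTerm}
    (hts : ∀ t ∈ ts, t.a ≤ N ∧ t.b ≤ N) (hks : (ks : Multiset ℕ) ≤ (Icc 1 N).val + (Icc 1 N).val)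
    (hcheck : checkNonneg ks (numeratorSum N ts ++ List.replicate pad 0)) :
    0 ≤ pairSum ts := by
  have h := evalList_mul_nonneg_of_checkNonneg (F := evenGF N * evenGF N)
    (fun h0 => by simpa using Multiset.mem_of_le hks h0)
    (fun s hs => prod_map_one_sub_mul_evenGF_mul_nonneg (hs.trans hks)) hcheck
  rwa [evalList_append, evalList_replicate_zero, mul_zero, add_zero,
    evalList_numeratorSum_mul hts] at h

/-! ### Pairs of partition series -/

/-- The exponent of the leading term of `pairGF a b`. -/
def pairWeight (a b : ℕ) : ℕ := a ^ 2 + 2 * a + b ^ 2 + 3 * b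

/-- The generating function of the pairs consisting of `a` distinct odd parts, all at least `3`, and
`b` distinct even parts, all at least `4`. -/
noncomputable def pairGF (a b : ℕ) : ℤ⟦X⟧ := X ^ pairWeight a b * (evenGF a * evenGF b)

/-- The part of `(1 + X) * (1 + y) * (1 - X ^ (a - b)) * pairGF a b` which consists of the powers
`X ^ n` with `n ≡ δ` modulo `2`; the exponents in `pairGF a b` itself have the parity of `a`. -/
noncomputable def excess (δ a b : ℕ) : ℤ⟦X⟧ :=
  X ^ ((a + δ) % 2) *
    ((1 + y) * ((1 - y ^ ((a - b + 1 - (a + δ) % 2) / 2)) * pairGF a b))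

lemma X_pow_add_X_pow_succ (d : ℕ) :
    (X ^ d + X ^ (d + 1) : ℤ⟦X⟧) = y ^ ((d + 1) / 2) + X * y ^ (d / 2) := by
  rw [y_pow, y_pow, ← pow_succ']
  rcases d.mod_two_eq_zero_or_one with hd | hd
  · rw [show 2 * ((d + 1) / 2) = d by omega, show 2 * (d / 2) = d by omega]
  · rw [show 2 * ((d + 1) / 2) = d + 1 by omega, show 2 * (d / 2) + 1 = d by omega, add_comm]

lemma excess_add_excess_succ (δ : ℕ) (a b : ℕ) :
    excess δ a b + excess (δ + 1) a b =
      (1 + X) * ((1 + y) * ((1 - X ^ (a - b)) * pairGF a b)) := by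
  have hsplit := X_pow_add_X_pow_succ (a - b)
  rw [pow_succ] at hsplit
  rw [excess, excess]
  rcases (a + δ).mod_two_eq_zero_or_one with h | h
  · rw [h, show (a + (δ + 1)) % 2 = 1 by omega, Nat.sub_zero, Nat.add_sub_cancel]
    linear_combination (1 + y) * pairGF a b * hsplit
  · rw [h, show (a + (δ + 1)) % 2 = 0 by omega, Nat.sub_zero, Nat.add_sub_cancel]
    linear_combination (1 + y) * pairGF a b * hsplit

lemma one_sub_mul_pairGF_nonneg {a : ℕ} (ha : 1 ≤ a) (b : ℕ) : 0 ≤ (1 - y) * pairGF a b :=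
  (mul_nonneg (pow_nonneg X_nonneg _) (one_sub_mul_evenGF_mul_nonneg ha b)).trans_eq
    (mul_left_comm _ _ _)

lemma excess_nonneg (δ : ℕ) {a : ℕ} (ha : 1 ≤ a) (b : ℕ) : 0 ≤ excess δ a b :=
  mul_nonneg (pow_nonneg X_nonneg _) (mul_nonneg (add_nonneg zero_le_one y_nonneg)
    (one_sub_pow_mul_nonneg y_nonneg (one_sub_mul_pairGF_nonneg ha b) _))

lemma telescope_step {K L k p q : ℕ} (hk : 2 ≤ k) (hkK : k ≤ K + 1) (hkL : k ≤ 3 → 1 ≤ L)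
    (hKL : K ≤ k + L) (hpq : p ≤ q) (hratio : k % 2 = 0 ∨ p ≤ (k - 1) * (q - p)) :
    p * ((1 - y ^ K) * (evenGF K * evenGF L)) ≤
      q * ((1 + y) * ((1 - y ^ (k / 2)) * (evenGF K * evenGF L))) +
        p * (y ^ k * ((1 - y ^ L) * (evenGF K * evenGF L))) := by
  have hF := one_sub_mul_evenGF_mul_nonneg (show 1 ≤ K by omega) L
  have hmain := natCast_mul_one_sub_pow_mul_le y_nonneg hk hpq hratio hF fun j h₁ h₂ =>
    one_sub_mul_one_sub_pow_mul_evenGF_mul_nonneg (by omega) (by omega) fun _ => hkL (by omega)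
  have htail := pow_mul_le_pow_mul y_nonneg hF hKL
  linear_combination hmain + (p : ℤ⟦X⟧) * htail

lemma pairWeight_succ_left {a b : ℕ} (hab : b < a) :
    pairWeight (a + 1) b = pairWeight a (b + 1) + 2 * (a - (b + 1)) + 1 := by
  obtain ⟨d, rfl⟩ := Nat.exists_eq_add_of_lt hab
  rw [show b + d + 1 - (b + 1) = d by omega, pairWeight, pairWeight]
  ring

lemma mul_le_sum_excess {δ s p q : ℕ} (hs : 4 ≤ s) (hpq : p ≤ q) (n : ℕ)
    (hn : 2 ≤ s - 2 * n + 1 - (s - n + δ) % 2) (hns : 2 * n < s)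
    (hratio : ∀ b ≤ n, (s - 2 * b + 1 - (s - b + δ) % 2) % 2 = 0 ∨
      p ≤ (s - 2 * b - (s - b + δ) % 2) * (q - p)) :
    (p : ℤ⟦X⟧) *
        (X ^ (pairWeight (s - n) n + (s - n + δ) % 2) * (evenGF (s - n - 1) * evenGF n)) ≤
      (q : ℤ⟦X⟧) * ∑ b ∈ range (n + 1), excess δ (s - b) b := by
  have hstep := mul_le_mul_of_nonneg_left
    (telescope_step hn (K := s - n) (L := n) (by omega) (by omega) (by omega) hpq
      ((hratio n le_rfl).imp_right fun h => h.trans_eq (by congr 1; omega)))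
    (pow_nonneg X_nonneg (pairWeight (s - n) n + (s - n + δ) % 2))
  have hI : (1 - y ^ (s - n)) * evenGF (s - n) = evenGF (s - n - 1) := by
    obtain ⟨K, hK⟩ : ∃ K, s - n = K + 1 := ⟨s - n - 1, by omega⟩
    rw [hK, one_sub_mul_evenGF_succ, Nat.add_sub_cancel]
  have hexcess : excess δ (s - n) n = X ^ (pairWeight (s - n) n + (s - n + δ) % 2) *
      ((1 + y) * ((1 - y ^ ((s - 2 * n + 1 - (s - n + δ) % 2) / 2)) *
        (evenGF (s - n) * evenGF n))) := by
    rw [excess, pairGF, pow_add, show s - n - n = s - 2 * n by omega]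
    ring
  rw [← hI, sum_range_succ, hexcess]
  cases n with
  | zero =>
    rw [pow_zero, sub_self] at hstep
    rw [sum_range_zero]
    linear_combination hstep
  | succ n =>
    have ih := mul_le_sum_excess hs hpq n (by omega) (by omega) fun b hb => hratio b (by omega)
    have hexp : X ^ (pairWeight (s - n) n + (s - n + δ) % 2) =
        X ^ (pairWeight (s - (n + 1)) (n + 1) + (s - (n + 1) + δ) % 2) *
          y ^ (s - 2 * (n + 1) + 1 - (s - (n + 1) + δ) % 2) := by
      obtain ⟨a, ha⟩ : ∃ a, s - n = a + 1 := ⟨s - n - 1, by omega⟩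
      rw [y_pow, ← pow_add, show s - (n + 1) = a by omega, ha, pairWeight_succ_left (by omega)]
      congr 1
      omega
    rw [hexp, show s - n - 1 = s - (n + 1) by omega, ← one_sub_mul_evenGF_succ n] at ih
    linear_combination hstep + ih

/-- A lower bound for `15 * bracket (c + 1)` after division by `X ^ (2 * c ^ 2 + 7 * c + 3)`. -/
noncomputable def bracketBound (c : ℕ) : ℤ⟦X⟧ :=
  pairSum [⟨10, 0, c, c⟩, ⟨12, c + 3, c + 1, c⟩, ⟨12, 2 * c + 6, c + 2, c⟩,
    ⟨15, 3 * c + 8, c + 2, c + 2⟩, ⟨-15, c + 3, c + 1, c + 1⟩]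

lemma bracketBound_eq (c : ℕ) :
    bracketBound c = 10 * (evenGF c * evenGF c) + 12 * (y ^ (c + 3) * (evenGF (c + 1) * evenGF c)) +
      12 * (y ^ (2 * c + 6) * (evenGF (c + 2) * evenGF c)) +
      15 * (y ^ (3 * c + 8) * (evenGF (c + 2) * evenGF (c + 2))) -
      15 * (y ^ (c + 3) * (evenGF (c + 1) * evenGF (c + 1))) := by
  simp only [bracketBound, pairSum, List.map_cons, List.map_nil, List.sum_cons, List.sum_nil,
    PairTerm.series]
  push_cast
  ring

lemma quartic_mul_evenGF_sq_le_bracketBound {c : ℕ} (hc : 23 ≤ c) :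
    (10 - 24 * y ^ (c + 1) + 7 * (y ^ (c + 1)) ^ 2 + 18 * (y ^ (c + 1)) ^ 3 + (y ^ (c + 1)) ^ 4) *
      (evenGF (c + 1) * evenGF (c + 1)) ≤ bracketBound c := by
  have hc₁ : 1 ≤ c + 1 := by omega
  have hz : 0 ≤ y ^ (c + 1) := pow_nonneg y_nonneg _
  have hF := mul_nonneg (evenGF_nonneg (c + 1)) (evenGF_nonneg (c + 1))
  have hyF := one_sub_mul_evenGF_mul_nonneg hc₁ (c + 1)
  have hyyF := one_sub_mul_one_sub_mul_evenGF_mul_nonneg hc₁ hc₁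
  have hyz : 24 * (y ^ (c + 1) * ((1 - y) * (evenGF (c + 1) * evenGF (c + 1)))) ≤
      (1 - y ^ (c + 1)) * (evenGF (c + 1) * evenGF (c + 1)) := by
    have h24 : 24 ≤ c + 1 := by omega
    have hmul := natCast_mul_pow_mul_le y_nonneg h24 fun j _ _ =>
      one_sub_mul_one_sub_pow_mul_nonneg y_nonneg hyyF j
    push_cast at hmul
    linear_combination hmul + pow_mul_le_pow_mul y_nonneg hyF h24
  have hh : 1 + y * y ^ (c + 1) ≤ geomY (c + 2) := by
    rw [← pow_succ']; exact one_add_pow_le_geomY (by omega)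
  refine (quartic_mul_le_sextic_mul y_nonneg hz hF hyF hyyF hyz).trans
    ((sextic_mul_le_quadratic_mul y_nonneg hz hh hF
      (one_sub_pow_mul_nonneg y_nonneg hyF _)).trans_eq ?_)
  rw [bracketBound_eq, evenGF_succ (c + 1), ← one_sub_mul_evenGF_succ c]
  ring

lemma bracketBound_nonneg_of_ge {c : ℕ} (hc : 23 ≤ c) : 0 ≤ bracketBound c := by
  have hI := one_sub_mul_evenGF_succ c
  have hzI : 0 ≤ (1 - y ^ (c + 1)) * evenGF c :=
    one_sub_pow_mul_nonneg y_nonneg (one_sub_mul_evenGF_nonneg (by omega)) _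
  refine (quartic_mul_nonneg (pow_nonneg y_nonneg _)
    (mul_nonneg (evenGF_nonneg _) (evenGF_nonneg _)) ?_ ?_ ?_).trans
      (quartic_mul_evenGF_sq_le_bracketBound hc)
  · exact one_sub_pow_mul_nonneg y_nonneg (one_sub_mul_evenGF_mul_nonneg (by omega) _) _
  · refine (pow_nonneg (evenGF_nonneg c) 2).trans_eq ?_
    rw [← hI]; ring
  · refine (pow_nonneg hzI 2).trans_eq ?_
    rw [← hI]; ring

lemma bracketBound_nonneg {c : ℕ} (hc : 3 ≤ c) : 0 ≤ bracketBound c := by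
  rcases le_or_gt 23 c with hc' | hc'
  · exact bracketBound_nonneg_of_ge hc'
  refine pairSum_nonneg (N := c + 2) (pad := 16) (ks := [1, 2, c + 1, c + 2, 1, 2, c + 1, c + 2])
    ?_ ?_ ?_
  all_goals interval_cases c <;> decide +kernel

/-- The sum of the terms `excess δ a b` with `b < a` and `a + b = s`. -/
noncomputable def antidiagonalExcess (δ s : ℕ) : ℤ⟦X⟧ :=
  ∑ b ∈ range ((s + 1) / 2), excess δ (s - b) b

/-- A group of terms whose exponents all have the parity of `b`, around the only negative one. -/
noncomputable def bracket (b : ℕ) : ℤ⟦X⟧ :=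
  antidiagonalExcess b (2 * b - 1) + antidiagonalExcess b (2 * b) +
    antidiagonalExcess b (2 * b + 1) + X * pairGF (b + 1) (b + 1) - X ^ 2 * pairGF b b

lemma antidiagonalExcess_nonneg (δ s : ℕ) : 0 ≤ antidiagonalExcess δ s :=
  sum_nonneg fun b hb => excess_nonneg δ (by rw [mem_range] at hb; omega) b

lemma mul_le_antidiagonalExcess {δ s p q a n : ℕ} (hs : 4 ≤ s) (hsa : s = a + 1 + n) (hpq : p ≤ q)
    (hn : 2 ≤ s - 2 * n + 1 - (a + 1 + δ) % 2) (hna : n ≤ a)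
    (hratio : ∀ b ≤ n, (s - 2 * b + 1 - (s - b + δ) % 2) % 2 = 0 ∨
      p ≤ (s - 2 * b - (s - b + δ) % 2) * (q - p)) :
    (p : ℤ⟦X⟧) * (X ^ (pairWeight (a + 1) n + (a + 1 + δ) % 2) * (evenGF a * evenGF n)) ≤
      (q : ℤ⟦X⟧) * antidiagonalExcess δ s := by
  have hsn : s - n = a + 1 := by omega
  have h := mul_le_sum_excess hs hpq n (by rwa [hsn]) (by omega) hratio
  rw [hsn, Nat.add_sub_cancel] at h
  refine h.trans (mul_le_mul_of_nonneg_left ?_ q.cast_nonneg)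
  refine sum_le_sum_of_subset_of_nonneg (range_subset_range.2 (by omega)) fun b hb _ => ?_
  rw [mem_range] at hb
  exact excess_nonneg δ (by omega) b

-- The smallest odd exponents `k` on the three antidiagonals are `3`, `5` and `5`, which allows
-- `p / q = (k - 1) / k`.
lemma X_pow_mul_bracketBound_le {c : ℕ} (hc : 2 ≤ c) :
    X ^ (2 * c ^ 2 + 7 * c + 3) * bracketBound c ≤ 15 * bracket (c + 1) := by
  have h₁ := mul_le_antidiagonalExcess (δ := c + 1) (s := 2 * c + 1) (p := 2) (q := 3) (a := c)
    (n := c) (by omega) (by omega) (by omega) (by omega) (by omega) fun b hb => by omega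
  have h₂ := mul_le_antidiagonalExcess (δ := c + 1) (s := 2 * c + 2) (p := 4) (q := 5) (a := c + 1)
    (n := c) (by omega) (by omega) (by omega) (by omega) (by omega) fun b hb => by omega
  have h₃ := mul_le_antidiagonalExcess (δ := c + 1) (s := 2 * c + 3) (p := 4) (q := 5) (a := c + 2)
    (n := c) (by omega) (by omega) (by omega) (by omega) (by omega) fun b hb => by omega
  rw [show (c + 1 + (c + 1)) % 2 = 0 by omega, pairWeight] at h₁
  rw [show (c + 1 + 1 + (c + 1)) % 2 = 1 by omega, pairWeight] at h₂
  rw [show (c + 2 + 1 + (c + 1)) % 2 = 0 by omega, pairWeight] at h₃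
  push_cast at h₁ h₂ h₃
  rw [bracket, bracketBound_eq, pairGF, pairGF, pairWeight, pairWeight,
    show 2 * (c + 1) - 1 = 2 * c + 1 by omega, show 2 * (c + 1) = 2 * c + 2 by ring,
    y_pow, y_pow, y_pow]
  linear_combination 5 * h₁ + 3 * h₂ + 3 * h₃

lemma nonneg_of_natCast_mul_nonneg {k : ℕ} (hk : 0 < k) {f : ℤ⟦X⟧} (hf : 0 ≤ (k : ℤ⟦X⟧) * f) :
    0 ≤ f := by
  refine nonneg_iff.2 fun n => ?_
  have hn := nonneg_iff.1 hf n
  rw [← nsmul_eq_mul, map_nsmul, nsmul_eq_mul] at hn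
  exact nonneg_of_mul_nonneg_right hn (by exact_mod_cast hk)

lemma bracket_nonneg_of_ge {b : ℕ} (hb : 4 ≤ b) : 0 ≤ bracket b := by
  obtain ⟨c, rfl⟩ := Nat.exists_eq_add_of_le' (show 1 ≤ b by omega)
  have h := (mul_nonneg (pow_nonneg X_nonneg _) (bracketBound_nonneg (show 3 ≤ c by omega))).trans
    (X_pow_mul_bracketBound_le (by omega))
  exact nonneg_of_natCast_mul_nonneg (k := 15) (by omega) (by exact_mod_cast h)

/-- The terms of `y ^ e * ((1 + y) * ((1 - y ^ m) * (evenGF a * evenGF b)))`, the shape of an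
`excess`. -/
def excessTerms (e m a b : ℕ) : List PairTerm :=
  [⟨1, e, a, b⟩, ⟨1, e + 1, a, b⟩, ⟨-1, e + m, a, b⟩, ⟨-1, e + m + 1, a, b⟩]

lemma bracket_two_nonneg : 0 ≤ bracket 2 := by
  have h := pairSum_nonneg (N := 4) (pad := 0) (ks := [1, 2, 3, 4, 1, 2, 3, 4])
    (ts := excessTerms 0 1 2 1 ++ excessTerms 2 1 3 0 ++ excessTerms 4 1 3 1 ++
      excessTerms 6 2 4 0 ++ excessTerms 8 2 4 1 ++ [⟨1, 11, 3, 3⟩, ⟨-1, 4, 2, 2⟩])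
    (by decide) (by decide) (by decide +kernel)
  refine (add_nonneg (mul_nonneg (pow_nonneg X_nonneg 12) h)
    (excess_nonneg 2 (show 1 ≤ 5 by omega) 0)).trans_eq ?_
  simp only [bracket, antidiagonalExcess, sum_range_succ, sum_range_zero, excess, pairGF,
    pairWeight, pairSum, PairTerm.series, excessTerms, List.map_append, List.map_cons,
    List.map_nil, List.sum_append, List.sum_cons, List.sum_nil, Nat.reduceMul, Nat.reduceAdd,
    Nat.reduceDiv, Nat.reduceSub, Nat.reduceMod, Nat.reducePow]
  push_cast
  simp only [y]
  ring

lemma bracket_three_nonneg : 0 ≤ bracket 3 := by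
  have h := pairSum_nonneg (N := 5) (pad := 0) (ks := [1, 2, 3, 4, 1, 2, 3, 4])
    (ts := excessTerms 0 1 3 2 ++ excessTerms 2 1 4 1 ++ excessTerms 5 3 5 0 ++
      excessTerms 5 1 4 2 ++ excessTerms 7 2 5 1 ++ excessTerms 10 2 5 2 ++
      [⟨1, 14, 4, 4⟩, ⟨-1, 5, 3, 3⟩])
    (by decide) (by decide) (by decide +kernel)
  have hrest := add_nonneg (add_nonneg (excess_nonneg 3 (show 1 ≤ 6 by omega) 0)
    (excess_nonneg 3 (show 1 ≤ 7 by omega) 0)) (excess_nonneg 3 (show 1 ≤ 6 by omega) 1)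
  refine (add_nonneg (mul_nonneg (pow_nonneg X_nonneg 25) h) hrest).trans_eq ?_
  simp only [bracket, antidiagonalExcess, sum_range_succ, sum_range_zero, excess, pairGF,
    pairWeight, pairSum, PairTerm.series, excessTerms, List.map_append, List.map_cons,
    List.map_nil, List.sum_append, List.sum_cons, List.sum_nil, Nat.reduceMul, Nat.reduceAdd,
    Nat.reduceDiv, Nat.reduceSub, Nat.reduceMod, Nat.reducePow]
  push_cast
  simp only [y]
  ring

lemma bracket_nonneg {b : ℕ} (hb : 2 ≤ b) : 0 ≤ bracket b := by
  rcases le_or_gt 4 b with hb' | hb'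
  · exact bracket_nonneg_of_ge hb'
  interval_cases b
  exacts [bracket_two_nonneg, bracket_three_nonneg]

lemma X_pow_mul_evenGF_one_le_bracket_one_add :
    X ^ 21 * evenGF 1 ≤ bracket 1 + antidiagonalExcess 3 4 +
      2 * (X ^ 11 + X ^ 13 + X ^ 15 + X ^ 17 + X ^ 19) := by
  have h := pairSum_nonneg (N := 3) (pad := 0) (ks := [1, 1, 2, 2, 3, 3])
    (ts := excessTerms 0 1 1 0 ++ excessTerms 3 1 2 0 ++ excessTerms 6 2 3 0 ++
      excessTerms 8 1 3 1 ++ [⟨1, 8, 2, 2⟩, ⟨-1, 3, 1, 1⟩, ⟨2, 4, 0, 0⟩, ⟨2, 5, 0, 0⟩,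
        ⟨2, 6, 0, 0⟩, ⟨2, 7, 0, 0⟩, ⟨2, 8, 0, 0⟩, ⟨-1, 9, 1, 0⟩])
    (by decide) (by decide) (by decide +kernel)
  refine sub_nonneg.1 ((add_nonneg (mul_nonneg (pow_nonneg X_nonneg 3) h)
    (excess_nonneg 3 (show 1 ≤ 4 by omega) 0)).trans_eq ?_)
  simp only [bracket, antidiagonalExcess, sum_range_succ, sum_range_zero, excess, pairGF,
    pairWeight, pairSum, PairTerm.series, excessTerms, List.map_append, List.map_cons,
    List.map_nil, List.sum_append, List.sum_cons, List.sum_nil, evenGF_zero, Nat.reduceMul,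
    Nat.reduceAdd, Nat.reduceDiv, Nat.reduceSub, Nat.reduceMod, Nat.reducePow]
  push_cast
  simp only [y]
  ring

/-! ### Partitions with restricted parity -/

/-- The generating function of the sets of `a` numbers taken from `r + 1, r + 3, r + 5, …`. -/
noncomputable def partsGF (r a : ℕ) : ℤ⟦X⟧ := X ^ (a ^ 2 + r * a) * evenGF a

lemma partsGF_succ (r a : ℕ) :
    partsGF r (a + 1) = partsGF (r + 2) (a + 1) + X ^ (r + 1) * partsGF (r + 2) a := by
  rw [partsGF, partsGF, partsGF, ← one_sub_mul_evenGF_succ a, y_pow]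
  ring

lemma partsGF_two_mul_partsGF_three (a b : ℕ) : partsGF 2 a * partsGF 3 b = pairGF a b := by
  rw [partsGF, partsGF, pairGF, pairWeight]
  ring

/-- The sum of `c #s * X ^ (size of s)` over the sets `s` of numbers `2 * i + 1 + ε` with
`k ≤ i < m`, where `s` is encoded by the indices `i`. -/
noncomputable def subsetSum (ε k m : ℕ) (c : ℕ → ℤ⟦X⟧) : ℤ⟦X⟧ :=
  ∑ s ∈ (Ico k m).powerset, c #s * X ^ (∑ i ∈ s, (2 * i + 1 + ε))

lemma subsetSum_of_lt (ε : ℕ) {k m : ℕ} (hkm : k < m) (c : ℕ → ℤ⟦X⟧) :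
    subsetSum ε k m c =
      subsetSum ε (k + 1) m fun a => c a + X ^ (2 * k + 1 + ε) * c (a + 1) := by
  have hk : k ∉ Ico (k + 1) m := by simp
  rw [subsetSum, ← insert_Ico_add_one_left_eq_Ico hkm, sum_powerset_insert hk, ← sum_add_distrib]
  refine sum_congr rfl fun s hs => ?_
  have hks : k ∉ s := fun h => hk (mem_powerset.1 hs h)
  rw [card_insert_of_notMem hks, sum_insert hks, pow_add]
  ring

lemma subsetSum_add_mul (ε k m : ℕ) (c d : ℕ → ℤ⟦X⟧) (f : ℤ⟦X⟧) :
    subsetSum ε k m c + f * subsetSum ε k m d = subsetSum ε k m fun a => c a + f * d a := by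
  rw [subsetSum, subsetSum, subsetSum, mul_sum, ← sum_add_distrib]
  exact sum_congr rfl fun s _ => by ring

lemma sum_mul_partsGF (r : ℕ) (c : ℕ → ℤ⟦X⟧) (n : ℕ) :
    ∑ a ∈ range (n + 1), c a * partsGF r a =
      ∑ a ∈ range n, (c a + X ^ (r + 1) * c (a + 1)) * partsGF (r + 2) a +
        c n * partsGF (r + 2) n := by
  induction n with
  | zero => simp [partsGF]
  | succ n ih =>
    rw [sum_range_succ, ih, sum_range_succ _ n, partsGF_succ]
    ring

lemma X_pow_dvd_subsetSum_sub (ε k j : ℕ) (c : ℕ → ℤ⟦X⟧) :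
    X ^ (2 * (j + k) + ε) ∣
      subsetSum ε k (j + k) c - ∑ a ∈ range (j + 1), c a * partsGF (2 * k + ε) a := by
  induction j generalizing k c with
  | zero => simp [subsetSum, partsGF, evenGF_zero]
  | succ j ih =>
    rw [subsetSum_of_lt ε (by omega), sum_mul_partsGF, ← sub_sub,
      show j + 1 + k = j + (k + 1) by ring, show 2 * k + ε + 2 = 2 * (k + 1) + ε by ring,
      show 2 * k + ε + 1 = 2 * k + 1 + ε by ring]
    refine dvd_sub (ih _ _) (Dvd.dvd.mul_left (Dvd.dvd.mul_right (pow_dvd_pow X ?_) _) _)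
    nlinarith

/-- The sum of `sign (#A - #B) * X ^ (size of A and B)` over the sets `A` of odd and `B` of even
positive integers which are at most `2 * m`. -/
noncomputable def signedSum (m : ℕ) : ℤ⟦X⟧ :=
  subsetSum 0 0 m fun a => subsetSum 1 0 m fun b => ((a - b : ℤ).sign : ℤ⟦X⟧)

/-- What the four choices of a set of parts from `{1, 2}` contribute to `signedSum` next to other
parts of which `d` more are odd than even. -/
noncomputable def smallPartsSign (d : ℤ) : ℤ⟦X⟧ :=
  (d.sign : ℤ⟦X⟧) + X * ((d + 1).sign : ℤ⟦X⟧) + X ^ 2 * ((d - 1).sign : ℤ⟦X⟧) +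
    X ^ 3 * (d.sign : ℤ⟦X⟧)

lemma signedSum_eq {m : ℕ} (hm : 0 < m) :
    signedSum m = subsetSum 0 1 m fun a => subsetSum 1 1 m fun b => smallPartsSign (a - b) := by
  rw [signedSum, subsetSum_of_lt 0 hm]
  congr! 2 with a
  rw [subsetSum_of_lt 1 hm, subsetSum_of_lt 1 hm, subsetSum_add_mul]
  congr! 2 with b
  rw [smallPartsSign]
  push_cast
  rw [show (a + 1 - (b + 1) : ℤ) = a - b by ring, show (a - (b + 1) : ℤ) = a - b - 1 by ring,
    show (a + 1 - b : ℤ) = a - b + 1 by ring]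
  ring

lemma X_pow_dvd_signedSum_sub {m : ℕ} (hm : 0 < m) :
    X ^ (2 * m) ∣ signedSum m -
      ∑ a ∈ range m, ∑ b ∈ range m, smallPartsSign (a - b) * pairGF a b := by
  obtain ⟨j, rfl⟩ := Nat.exists_eq_add_of_le' hm
  have heven (a : ℕ) := X_pow_dvd_subsetSum_sub 1 1 j fun b => smallPartsSign (a - b)
  have hsum (m : ℕ) : ∑ a ∈ range m, ∑ b ∈ range m, smallPartsSign (a - b) * pairGF a b =
      ∑ a ∈ range m, (∑ b ∈ range m, smallPartsSign (a - b) * partsGF 3 b) * partsGF 2 a :=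
    sum_congr rfl fun a _ => by
      rw [sum_mul]
      exact sum_congr rfl fun b _ => by rw [← partsGF_two_mul_partsGF_three]; ring
  rw [signedSum_eq hm, hsum, ← sub_add_sub_cancel, ← sum_sub_distrib]
  refine dvd_add (X_pow_dvd_subsetSum_sub 0 1 j _) (dvd_sum fun a _ => ?_)
  rw [← sub_mul]
  exact ((pow_dvd_pow X (Nat.le_succ _)).trans (heven a)).mul_right _

lemma sum_range_sum_range_eq_diag_add {A : Type*} [AddCommMonoid A] (g : ℕ → ℕ → A) (n : ℕ) :
    ∑ a ∈ range n, ∑ b ∈ range n, g a b =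
      ∑ a ∈ range n, g a a + ∑ a ∈ range n, ∑ b ∈ range a, (g a b + g b a) := by
  induction n with
  | zero => simp
  | succ n ih =>
    simp only [sum_range_succ _ n, sum_add_distrib] at ih ⊢
    rw [ih]
    abel

/-- The contribution of `pairGF a b` and `pairGF b a` to `signedSum`, when `b < a`. -/
noncomputable def crossTerm (a b : ℕ) : ℤ⟦X⟧ :=
  (1 + X) * ((1 + y) * ((1 - X ^ (a - b)) * pairGF a b))

lemma pairGF_swap {a b : ℕ} (hab : b ≤ a) : pairGF b a = X ^ (a - b) * pairGF a b := by
  obtain ⟨d, rfl⟩ := Nat.exists_eq_add_of_le hab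
  rw [pairGF, pairGF, pairWeight, pairWeight, Nat.add_sub_cancel_left]
  ring

lemma smallPartsSign_zero : smallPartsSign 0 = X - X ^ 2 := by
  simp [smallPartsSign, sub_eq_add_neg]

lemma smallPartsSign_mul_pairGF_add {a b : ℕ} (hab : b < a) :
    smallPartsSign (a - b) * pairGF a b + smallPartsSign (b - a) * pairGF b a = crossTerm a b := by
  have hneg {d : ℤ} (hd : d < 0) : d.sign = -1 := Int.sign_eq_neg_one_of_neg hd
  have hpos {d : ℤ} (hd : 0 < d) : d.sign = 1 := Int.sign_eq_one_of_pos hd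
  rw [pairGF_swap hab.le, crossTerm, smallPartsSign, smallPartsSign, y,
    hpos (show (0 : ℤ) < a - b by omega), hneg (show (b - a : ℤ) < 0 by omega),
    hpos (show (0 : ℤ) < a - b + 1 by omega), hneg (show (b - a - 1 : ℤ) < 0 by omega)]
  obtain rfl | h := (Nat.succ_le_of_lt hab).eq_or_lt
  · rw [show ((b + 1 : ℕ) - b - 1 : ℤ) = 0 by push_cast; ring,
      show (b - (b + 1 : ℕ) + 1 : ℤ) = 0 by push_cast; ring, show b.succ - b = 1 by omega,
      Int.sign_zero]
    push_cast
    ring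
  · rw [hpos (show (0 : ℤ) < a - b - 1 by omega), hneg (show (b - a + 1 : ℤ) < 0 by omega)]
    push_cast
    ring

lemma antidiagonalExcess_add_succ (δ s : ℕ) :
    antidiagonalExcess δ s + antidiagonalExcess (δ + 1) s =
      ∑ b ∈ range ((s + 1) / 2), crossTerm (s - b) b := by
  rw [antidiagonalExcess, antidiagonalExcess, ← sum_add_distrib]
  exact sum_congr rfl fun b _ => excess_add_excess_succ δ _ b

lemma crossTerm_nonneg {a b : ℕ} (hab : b < a) : 0 ≤ crossTerm a b := by
  rw [crossTerm, ← excess_add_excess_succ 0]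
  exact add_nonneg (excess_nonneg _ (by omega) b) (excess_nonneg _ (by omega) b)

lemma sum_antidiagonal_le_sum_triangle {A : Type*} [AddCommMonoid A] [PartialOrder A]
    [IsOrderedAddMonoid A] {f : ℕ → ℕ → A} (hf : ∀ a b, b < a → 0 ≤ f a b) (n : ℕ) :
    ∑ s ∈ range n, ∑ b ∈ range ((s + 1) / 2), f (s - b) b ≤
      ∑ a ∈ range n, ∑ b ∈ range a, f a b := by
  let toPair : (Σ _ : ℕ, ℕ) → Σ _ : ℕ, ℕ := fun x => ⟨x.1 - x.2, x.2⟩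
  have hinj : Set.InjOn toPair ((range n).sigma fun s => range ((s + 1) / 2)) := by
    rintro ⟨s, b⟩ h ⟨s', b'⟩ h' heq
    simp only [coe_sigma, Set.mem_sigma_iff, mem_coe, mem_range] at h h'
    simp only [toPair, Sigma.mk.injEq, heq_eq_eq] at heq ⊢
    omega
  rw [sum_sigma', sum_sigma', ← sum_image (f := fun x => f x.1 x.2) hinj]
  refine sum_le_sum_of_subset_of_nonneg ?_ fun x hx _ => hf _ _ (by simpa using (mem_sigma.1 hx).2)
  rintro ⟨a, b⟩ h
  simp only [mem_image, mem_sigma, mem_range, toPair, Sigma.exists, Sigma.mk.injEq,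
    heq_eq_eq] at h ⊢
  omega

/-- A truncation of the difference of the two generating functions, arranged by antidiagonals. -/
noncomputable def partialExcess (K : ℕ) : ℤ⟦X⟧ :=
  X * ∑ b ∈ range (K + 1), pairGF b b - X ^ 2 * ∑ b ∈ range K, pairGF b b +
    ∑ s ∈ range (2 * K), ∑ b ∈ range ((s + 1) / 2), crossTerm (s - b) b

lemma partialExcess_succ_eq_sum_bracket (K : ℕ) :
    partialExcess (K + 1) = X - X ^ 2 + X * pairGF 1 1 + antidiagonalExcess (K + 1) (2 * K + 1) +
      ∑ b ∈ range K, (bracket (b + 1) + antidiagonalExcess (b + 2) (2 * b + 2)) := by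
  induction K with
  | zero =>
    simp [partialExcess, sum_range_succ, antidiagonalExcess, crossTerm, excess, pairGF, pairWeight,
      evenGF_zero, y]
    ring
  | succ K ih =>
    have h₁ := antidiagonalExcess_add_succ (K + 1) (2 * K + 2)
    have h₂ := antidiagonalExcess_add_succ (K + 1) (2 * K + 3)
    have hstep : partialExcess (K + 2) = partialExcess (K + 1) +
        (X * pairGF (K + 2) (K + 2) - X ^ 2 * pairGF (K + 1) (K + 1) +
          (antidiagonalExcess (K + 1) (2 * K + 2) + antidiagonalExcess (K + 2) (2 * K + 2)) +
          (antidiagonalExcess (K + 1) (2 * K + 3) + antidiagonalExcess (K + 2) (2 * K + 3))) := by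
      rw [h₁, h₂, partialExcess, partialExcess, show 2 * (K + 2) = 2 * (K + 1) + 1 + 1 by ring]
      simp only [sum_range_succ _ (2 * (K + 1) + 1), sum_range_succ _ (2 * (K + 1)),
        sum_range_succ _ (K + 2), sum_range_succ _ (K + 1)]
      ring_nf
    rw [hstep, ih, sum_range_succ _ K, bracket, show 2 * (K + 1) - 1 = 2 * K + 1 by omega]
    ring_nf

lemma antidiagonalExcess_two_two : antidiagonalExcess 2 2 = X ^ 8 * evenGF 1 := by
  rw [← one_sub_mul_evenGF_succ 1]
  simp only [antidiagonalExcess, sum_range_succ, sum_range_zero, excess, pairGF, pairWeight,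
    evenGF_zero, Nat.reduceMul, Nat.reduceAdd, Nat.reduceDiv, Nat.reduceSub, Nat.reduceMod,
    Nat.reducePow]
  ring

lemma X_pow_add_X_pow_mul_evenGF_one_le {K : ℕ} (hK : 3 ≤ K) :
    (X ^ 8 + X ^ 21) * evenGF 1 ≤
      partialExcess K + X ^ 2 + 2 * (X ^ 11 + X ^ 13 + X ^ 15 + X ^ 17 + X ^ 19) := by
  obtain ⟨k, rfl⟩ := Nat.exists_eq_add_of_le' hK
  have hlarge : 0 ≤ ∑ b ∈ range k, (bracket (b + 3) + antidiagonalExcess (b + 4) (2 * b + 6)) :=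
    sum_nonneg fun b _ => add_nonneg (bracket_nonneg (by omega)) (antidiagonalExcess_nonneg _ _)
  have hdiag : 0 ≤ X * pairGF 1 1 := mul_nonneg X_nonneg (mul_nonneg (pow_nonneg X_nonneg _)
    (mul_nonneg (evenGF_nonneg 1) (evenGF_nonneg 1)))
  have hlast := antidiagonalExcess_nonneg (k + 3) (2 * (k + 2) + 1)
  rw [partialExcess_succ_eq_sum_bracket, sum_range_succ', sum_range_succ']
  simp only [add_assoc, mul_add, zero_add, Nat.reduceMul, Nat.reduceAdd, mul_zero] at *
  rw [antidiagonalExcess_two_two]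
  linear_combination X_nonneg + hdiag + hlast + hlarge + bracket_nonneg le_rfl +
    X_pow_mul_evenGF_one_le_bracket_one_add

lemma coeff_evenGF_one (n : ℕ) : coeff n (evenGF 1) = if 2 ∣ n then 1 else 0 := by
  simp [evenGF, geomY]

lemma coeff_partialExcess_pos {K n : ℕ} (hK : 3 ≤ K) (hn : 20 ≤ n) :
    0 < coeff n (partialExcess K) := by
  have h := X_pow_add_X_pow_mul_evenGF_one_le hK n
  simp only [add_mul, two_mul, map_add, coeff_X_pow_mul', coeff_evenGF_one, coeff_X_pow] at h
  split_ifs at h <;> omega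

lemma coeff_X_sq_mul_pairGF_of_le {n b : ℕ} (hnb : n ≤ b) : coeff n (X ^ 2 * pairGF b b) = 0 := by
  rw [pairGF, ← mul_assoc, ← pow_add, pairWeight, coeff_X_pow_mul', if_neg (by nlinarith)]

lemma partialExcess_le {K : ℕ} (hK : 1 ≤ K) :
    partialExcess K ≤
      ∑ a ∈ range (2 * K), ∑ b ∈ range (2 * K), smallPartsSign (a - b) * pairGF a b +
        ∑ b ∈ Ico K (2 * K), X ^ 2 * pairGF b b := by
  have hpair (a b : ℕ) : 0 ≤ pairGF a b :=
    mul_nonneg (pow_nonneg X_nonneg _) (mul_nonneg (evenGF_nonneg a) (evenGF_nonneg b))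
  have hdiag : X * ∑ b ∈ range (K + 1), pairGF b b ≤ X * ∑ b ∈ range (2 * K), pairGF b b :=
    mul_le_mul_of_nonneg_left (sum_le_sum_of_subset_of_nonneg (range_subset_range.2 (by omega))
      fun b _ _ => hpair b b) X_nonneg
  have hcross := sum_antidiagonal_le_sum_triangle (f := crossTerm) (fun _ _ => crossTerm_nonneg)
    (2 * K)
  have hfold : ∑ a ∈ range (2 * K), ∑ b ∈ range (2 * K), smallPartsSign (a - b) * pairGF a b =
      (X - X ^ 2) * ∑ b ∈ range (2 * K), pairGF b b +
        ∑ a ∈ range (2 * K), ∑ b ∈ range a, crossTerm a b := by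
    rw [sum_range_sum_range_eq_diag_add, mul_sum]
    congr 1
    · exact sum_congr rfl fun b _ => by rw [sub_self, smallPartsSign_zero]
    · exact sum_congr rfl fun a _ => sum_congr rfl fun b hb =>
        smallPartsSign_mul_pairGF_add (mem_range.1 hb)
  rw [hfold, partialExcess, ← mul_sum]
  have hsplit := sum_range_add_sum_Ico (fun b => pairGF b b) (show K ≤ 2 * K by omega)
  linear_combination hdiag + hcross - X ^ 2 * hsplit

lemma coeff_signedSum_pos {n : ℕ} (hn : 20 ≤ n) : 0 < coeff n (signedSum (2 * n)) := by
  have htrunc := X_pow_dvd_iff.1 (X_pow_dvd_signedSum_sub (show 0 < 2 * n by omega)) n (by omega)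
  have hle := partialExcess_le (show 1 ≤ n by omega) n
  have hpos := coeff_partialExcess_pos (show 3 ≤ n by omega) hn
  rw [map_sub, sub_eq_zero] at htrunc
  have htail : coeff n (∑ b ∈ Ico n (2 * n), X ^ 2 * pairGF b b) = 0 := by
    rw [map_sum]
    exact sum_eq_zero fun b hb => coeff_X_sq_mul_pairGF_of_le (mem_Ico.1 hb).1
  rw [map_add, htail, add_zero, ← htrunc] at hle
  omega

/-! ### Partitions into distinct parts -/

/-- The numbers `2 * i + 1` with `i ∈ A` and `2 * i + 2` with `i ∈ B`. -/
def distinctParts (A B : Finset ℕ) : Multiset ℕ :=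
  A.val.map (2 * · + 1) + B.val.map (2 * · + 2)

lemma two_mul_add_one_mem_distinctParts {A B : Finset ℕ} {i : ℕ} :
    2 * i + 1 ∈ distinctParts A B ↔ i ∈ A := by
  simp only [distinctParts, Multiset.mem_add, Multiset.mem_map, mem_val]
  exact ⟨by rintro (⟨j, hj, h⟩ | ⟨j, -, h⟩); exacts [by rwa [show i = j by omega], by omega],
    fun hi => .inl ⟨i, hi, rfl⟩⟩

lemma two_mul_add_two_mem_distinctParts {A B : Finset ℕ} {i : ℕ} :
    2 * i + 2 ∈ distinctParts A B ↔ i ∈ B := by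
  simp only [distinctParts, Multiset.mem_add, Multiset.mem_map, mem_val]
  exact ⟨by rintro (⟨j, -, h⟩ | ⟨j, hj, h⟩); exacts [by omega, by rwa [show i = j by omega]],
    fun hi => .inr ⟨i, hi, rfl⟩⟩

lemma nodup_distinctParts (A B : Finset ℕ) : (distinctParts A B).Nodup := by
  refine Multiset.nodup_add.2 ⟨A.nodup.map fun i j h => by simpa using h,
    B.nodup.map fun i j h => by simpa using h, Multiset.disjoint_left.2 fun {x} hA hB => ?_⟩
  obtain ⟨i, -, hi⟩ := Multiset.mem_map.1 hA
  obtain ⟨j, -, hj⟩ := Multiset.mem_map.1 hB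
  omega

lemma sum_distinctParts (A B : Finset ℕ) :
    (distinctParts A B).sum = ∑ i ∈ A, (2 * i + 1) + ∑ i ∈ B, (2 * i + 2) :=
  Multiset.sum_add _ _

lemma filter_odd_distinctParts (A B : Finset ℕ) :
    (distinctParts A B).filter (· % 2 = 1) = A.val.map (2 * · + 1) := by
  rw [distinctParts, Multiset.filter_add, Multiset.filter_eq_self.2, Multiset.filter_eq_nil.2,
    add_zero] <;>
  · intro x hx
    obtain ⟨i, -, rfl⟩ := Multiset.mem_map.1 hx
    omega

lemma filter_even_distinctParts (A B : Finset ℕ) :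
    (distinctParts A B).filter (· % 2 = 0) = B.val.map (2 * · + 2) := by
  rw [distinctParts, Multiset.filter_add, Multiset.filter_eq_nil.2, Multiset.filter_eq_self.2,
    zero_add] <;>
  · intro x hx
    obtain ⟨i, -, rfl⟩ := Multiset.mem_map.1 hx
    omega

/-- The indices `i` of the parts `2 * i + 1 + ε` of a partition. -/
def partIndices (ε : ℕ) {n : ℕ} (l : n.Partition) : Finset ℕ :=
  (range n).filter fun i => 2 * i + 1 + ε ∈ l.parts

lemma mem_partIndices {ε n i : ℕ} {l : n.Partition} :
    i ∈ partIndices ε l ↔ 2 * i + 1 + ε ∈ l.parts := by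
  rw [partIndices, mem_filter, mem_range, and_iff_right_iff_imp]
  intro hi
  have := l.parts_sum ▸ Multiset.le_sum_of_mem hi
  omega

lemma distinctParts_partIndices {n : ℕ} {l : n.Partition} (hl : l.parts.Nodup) :
    distinctParts (partIndices 0 l) (partIndices 1 l) = l.parts := by
  refine (Multiset.Nodup.ext (nodup_distinctParts _ _) hl).2 fun x => ?_
  obtain ⟨i, rfl | rfl⟩ := x.even_or_odd'
  · rcases i with _ | i
    · exact iff_of_false (by simp [distinctParts]) fun h => (l.parts_pos h).ne rfl
    · rw [mul_add_one, two_mul_add_two_mem_distinctParts, mem_partIndices]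
  · rw [two_mul_add_one_mem_distinctParts, mem_partIndices, add_zero]

lemma sum_partition_eq_sum_powerset {n m : ℕ} (hnm : n ≤ m) (f : ℕ → ℕ → ℤ) :
    ∑ l : n.Partition with l.parts.Nodup, f l.oddCount l.evenCount =
      ∑ p ∈ (Ico 0 m).powerset ×ˢ (Ico 0 m).powerset with (distinctParts p.1 p.2).sum = n,
        f #p.1 #p.2 := by
  have hsub (ε : ℕ) (l : n.Partition) : partIndices ε l ⊆ Ico 0 m := fun i hi =>
    mem_Ico.2 ⟨i.zero_le, (mem_range.1 (mem_filter.1 hi).1).trans_le hnm⟩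
  refine sum_nbij (fun l => (partIndices 0 l, partIndices 1 l)) ?_ ?_ ?_ ?_
  · intro l hl
    have hparts := distinctParts_partIndices (mem_filter.1 hl).2
    exact mem_filter.2 ⟨mem_product.2 ⟨mem_powerset.2 (hsub 0 l), mem_powerset.2 (hsub 1 l)⟩,
      hparts ▸ l.parts_sum⟩
  · intro l hl l' hl' heq
    rw [Prod.mk.injEq] at heq
    apply Nat.Partition.ext
    rw [← distinctParts_partIndices (mem_filter.1 hl).2, heq.1, heq.2,
      distinctParts_partIndices (mem_filter.1 hl').2]
  · rintro ⟨A, B⟩ hAB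
    have hpos {x : ℕ} (hx : x ∈ distinctParts A B) : 0 < x := by
      rcases Multiset.mem_add.1 hx with h | h <;>
      · obtain ⟨i, -, rfl⟩ := Multiset.mem_map.1 h
        omega
    refine ⟨⟨distinctParts A B, hpos, (mem_filter.1 hAB).2⟩,
      mem_filter.2 ⟨mem_univ _, nodup_distinctParts A B⟩, Prod.ext ?_ ?_⟩
    · ext i
      rw [mem_partIndices, add_zero, two_mul_add_one_mem_distinctParts]
    · ext i
      rw [mem_partIndices, two_mul_add_two_mem_distinctParts]
  · intro l hl
    rw [Nat.Partition.oddCount, Nat.Partition.evenCount,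
      ← distinctParts_partIndices (mem_filter.1 hl).2, filter_odd_distinctParts,
      filter_even_distinctParts, Multiset.card_map, Multiset.card_map, card_val, card_val]

lemma coeff_signedSum (n m : ℕ) :
    coeff n (signedSum m) =
      ∑ p ∈ (Ico 0 m).powerset ×ˢ (Ico 0 m).powerset with (distinctParts p.1 p.2).sum = n,
        (#p.1 - #p.2 : ℤ).sign := by
  rw [sum_filter, sum_product, signedSum, subsetSum, map_sum]
  refine sum_congr rfl fun A _ => ?_
  rw [subsetSum, sum_mul, map_sum]
  refine sum_congr rfl fun B _ => ?_
  rw [mul_assoc, ← pow_add, add_comm, ← map_intCast (C (R := ℤ)), coeff_C_mul, coeff_X_pow,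
    mul_ite, mul_one, mul_zero, sum_distinctParts]
  simp only [add_zero, eq_comm, Int.cast_id]

lemma natCard_sub_natCard_eq_sum_sign (n : ℕ) :
    (Nat.card {l : n.Partition // l.parts.Nodup ∧ l.evenCount < l.oddCount} : ℤ) -
        Nat.card {l : n.Partition // l.parts.Nodup ∧ l.oddCount < l.evenCount} =
      ∑ l : n.Partition with l.parts.Nodup, (l.oddCount - l.evenCount : ℤ).sign := by
  classical
  rw [Nat.card_eq_fintype_card, Nat.card_eq_fintype_card, Fintype.card_subtype,
    Fintype.card_subtype, ← filter_filter, ← filter_filter, card_filter, card_filter]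
  push_cast
  rw [← sum_sub_distrib]
  refine sum_congr rfl fun l _ => ?_
  rcases lt_trichotomy l.oddCount l.evenCount with h | h | h
  · rw [if_neg (by omega), if_pos h, Int.sign_eq_neg_one_of_neg (by omega), zero_sub]
  · simp [h]
  · rw [if_pos h, if_neg (by omega), Int.sign_eq_one_of_pos (by omega), sub_zero]

end ParityBias

/-- For every integer `n > 19`, among partitions of `n` into distinct parts, those with
more odd parts than even parts outnumber those with more even parts than odd parts. -/
theorem do_gt_de (n : ℕ) (hn : 19 < n) :
    Nat.card {l : n.Partition // l.parts.Nodup ∧ l.evenCount < l.oddCount} >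
      Nat.card {l : n.Partition // l.parts.Nodup ∧ l.oddCount < l.evenCount} := by
  have hsub := ParityBias.natCard_sub_natCard_eq_sum_sign n
  have hpos := ParityBias.coeff_signedSum_pos (show 20 ≤ n from hn)
  rw [ParityBias.coeff_signedSum, ← ParityBias.sum_partition_eq_sum_powerset
    (show n ≤ 2 * n by omega) fun a b => (a - b : ℤ).sign, ← hsub] at hpos
  omega
end

section
/- For every integer n > 7, the number of partitions of n with all parts at least 2 and more odd parts than even parts is strictly less than the number of partitions of n with all parts at least 2 and more even parts than odd parts; that is, q_o(n) < q_e(n). -/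
/-!
Let `P a = ∏ i ∈ {1, …, a}, (1 - q ^ (2 * i))⁻¹`. Partitions without ones having `a` odd and `b`
even parts are counted by `F a b = q ^ (3 * a + 2 * b) * P a * P b`, and `P` is coefficientwise
increasing. So if `3 * a + 2 * b = 3 * a' + 2 * b'`, `b ≤ a'` and `a ≤ b'`, then `F a b ≤ F a' b'`.
This bounds `F (k + 2 * e) k` by `F k (k + 3 * e)` and `F (k + 2 * e + 3) k` by
`F (k + 1) (k + 3 * e + 3)`: an odd excess `2 * e` is sent to the even excess `3 * e`, and an odd
excess `2 * e + 3` to the even excess `3 * e + 2`, where the terms `F 0 (3 * e + 2)` are not used.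
The odd excess one is distributed over the even excesses one and four, and over `F 0 2`, by
expanding `P (k + 1)` through `P (k + 1) = P k + q ^ (2 * k + 2) * P (k + 1)`. What is left over,
`F 0 1 = q ^ 2 * P 1` and `q ^ 9 * P 1`, makes the inequality strict in every degree above seven;
the bound on `F 1 0` costs the correction `q ^ 3 + q ^ 5`.
-/

namespace PartsParity

open Finset PowerSeries

section FiniteSums

theorem filter_add_eq_left {α : Type*} (p : α → Prop) [DecidablePred p]
    {s t : Multiset α} (hs : ∀ a ∈ s, p a) (ht : ∀ a ∈ t, ¬p a) : (s + t).filter p = s := by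
  rw [Multiset.filter_add, Multiset.filter_eq_self.2 hs, Multiset.filter_eq_nil.2 ht, add_zero]

theorem sum_range_two_mul_add_one {M : Type*} [AddCommMonoid M] (f : ℕ → M) (n : ℕ) :
    ∑ d ∈ range (2 * n + 1), f d = f 0 + ∑ e ∈ range n, (f (2 * e + 1) + f (2 * e + 2)) := by
  induction n with
  | zero => simp only [mul_zero, zero_add, sum_range_one, range_zero, sum_empty, add_zero]
  | succ n ih =>
    rw [mul_add_one, add_right_comm, sum_range_succ, sum_range_succ, ih, sum_range_succ]
    simp only [add_assoc]

theorem sum_range_three_mul_add_one {M : Type*} [AddCommMonoid M] (f : ℕ → M) (n : ℕ) :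
    ∑ d ∈ range (3 * n + 1), f d =
      f 0 + ∑ e ∈ range n, (f (3 * e + 1) + f (3 * e + 2) + f (3 * e + 3)) := by
  induction n with
  | zero => simp only [mul_zero, zero_add, sum_range_one, range_zero, sum_empty, add_zero]
  | succ n ih =>
    rw [mul_add_one, add_right_comm, sum_range_succ, sum_range_succ, sum_range_succ, ih,
      sum_range_succ]
    simp only [add_assoc]

theorem card_filter_lt_eq_sum {α : Type*} (s : Finset α) (a b : α → ℕ) {D K : ℕ}
    (ha : ∀ x ∈ s, a x < K) (hb : ∀ x ∈ s, b x ≤ D) :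
    #{x ∈ s | a x < b x} =
      ∑ d ∈ range D, ∑ k ∈ range K, #{x ∈ s | a x = k ∧ b x = k + (d + 1)} := by
  rw [card_eq_sum_card_fiberwise (f := fun x => (b x - a x - 1, a x)) (t := range D ×ˢ range K),
    sum_product]
  · refine sum_congr rfl fun d _ => sum_congr rfl fun k _ => ?_
    rw [filter_filter]
    congr 1
    refine filter_congr fun x _ => ?_
    rw [Prod.mk.injEq]
    omega
  · intro x hx
    obtain ⟨hxs, hlt⟩ := mem_filter.1 hx
    have := hb x hxs
    exact mem_product.2 ⟨mem_range.2 (by dsimp only; omega), mem_range.2 (ha x hxs)⟩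

end FiniteSums

section CoefficientwiseOrder

variable {R : Type*} [Semiring R] [PartialOrder R]

/-- The coefficientwise order on power series. -/
noncomputable instance coeffwiseOrder : PartialOrder R⟦X⟧ where
  le f g := ∀ n, coeff n f ≤ coeff n g
  le_refl _ _ := le_rfl
  le_trans _ _ _ hfg hgh n := (hfg n).trans (hgh n)
  le_antisymm _ _ hfg hgf := PowerSeries.ext fun n => (hfg n).antisymm (hgf n)

theorem coeff_mono (n : ℕ) : Monotone (coeff n : R⟦X⟧ → R) := fun _ _ h => h n

instance [IsOrderedRing R] : IsOrderedRing R⟦X⟧ where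
  add_le_add_left f g h e n := by
    simpa only [map_add] using add_le_add_left (h n) (coeff n e)
  zero_le_one n := by
    rw [coeff_one, map_zero]
    split_ifs
    exacts [zero_le_one, le_rfl]
  mul_le_mul_of_nonneg_left f hf g h hgh n := by
    simp only [coeff_mul]
    exact sum_le_sum fun p _ => mul_le_mul_of_nonneg_left (hgh p.2) (by simpa using hf p.1)
  mul_le_mul_of_nonneg_right f hf g h hgh n := by
    simp only [coeff_mul]
    exact sum_le_sum fun p _ => mul_le_mul_of_nonneg_right (hgh p.1) (by simpa using hf p.2)

instance [CanonicallyOrderedAdd R] : CanonicallyOrderedAdd R⟦X⟧ where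
  exists_add_of_le {f g} h := by
    choose c hc using fun n => exists_add_of_le (h n)
    exact ⟨mk c, PowerSeries.ext fun n => by rw [hc, map_add, coeff_mk]⟩
  le_add_self f g n := by simp
  le_self_add f g n := by simp

theorem le_of_eq_add_X_pow_mul [IsOrderedRing R] {m : ℕ} (hm : m ≠ 0) {f f' g g' : R⟦X⟧}
    (hf : f = g + X ^ m * f) (hf' : f' = g' + X ^ m * f') (hg : g ≤ g') : f ≤ f' := by
  intro n
  induction n using Nat.strong_induction_on with
  | _ n ih =>
    rw [hf, hf', map_add, map_add, coeff_X_pow_mul', coeff_X_pow_mul']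
    refine add_le_add (hg n) ?_
    split_ifs with hmn
    exacts [ih (n - m) (by omega), le_rfl]

end CoefficientwiseOrder

section StepSeries

/-- The multisets of `k` elements of `{r, r + 2, r + 4, …}` with sum `n`, as a finset: all their
elements lie in `range (n + 1)`. -/
def stepMultisets (r k n : ℕ) : Finset (Multiset ℕ) :=
  (((range (n + 1)).sym k).image (↑)).filter fun s => s.sum = n ∧ ∀ p ∈ s, r ≤ p ∧ p % 2 = r % 2

theorem mem_stepMultisets {r k n : ℕ} {s : Multiset ℕ} :
    s ∈ stepMultisets r k n ↔ s.card = k ∧ s.sum = n ∧ ∀ p ∈ s, r ≤ p ∧ p % 2 = r % 2 := by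
  simp only [stepMultisets, mem_filter, mem_image, mem_sym_iff, mem_range, and_congr_left_iff]
  rintro ⟨hsum, -⟩
  constructor
  · rintro ⟨t, -, rfl⟩
    exact t.2
  · intro hcard
    exact ⟨⟨s, hcard⟩, fun p hp => by
      have : p ≤ s.sum := Multiset.le_sum_of_mem hp
      omega, rfl⟩

theorem filter_mem_stepMultisets (r k n : ℕ) :
    {s ∈ stepMultisets r (k + 1) (r + n) | r ∈ s} = (stepMultisets r k n).image (r ::ₘ ·) := by
  ext s
  simp only [mem_filter, mem_image, mem_stepMultisets]
  constructor
  · rintro ⟨hs, hr⟩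
    obtain ⟨t, rfl⟩ := Multiset.exists_cons_of_mem hr
    simp only [Multiset.card_cons, Multiset.sum_cons, Multiset.forall_mem_cons] at hs
    exact ⟨t, ⟨by omega, by omega, hs.2.2.2⟩, rfl⟩
  · rintro ⟨t, ⟨rfl, rfl, ht⟩, rfl⟩
    simpa using ht

theorem filter_notMem_stepMultisets (r k n : ℕ) :
    {s ∈ stepMultisets r k (2 * k + n) | r ∉ s} =
      (stepMultisets r k n).image (Multiset.map (· + 2)) := by
  ext s
  simp only [mem_filter, mem_image, mem_stepMultisets]
  constructor
  · rintro ⟨⟨hcard, hsum, hs⟩, hr⟩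
    have hs' : ∀ p ∈ s, r + 2 ≤ p ∧ p % 2 = r % 2 := fun p hp => by
      have := hs p hp
      have : p ≠ r := fun h => hr (h ▸ hp)
      omega
    obtain ⟨t, rfl⟩ : ∃ t : Multiset ℕ, t.map (· + 2) = s := by
      refine ⟨s.map (· - 2), ?_⟩
      rw [Multiset.map_map]
      refine (Multiset.map_congr rfl fun p hp => ?_).trans s.map_id
      have := hs' p hp
      simp only [Function.comp_apply, id]
      omega
    simp only [Multiset.card_map, Multiset.sum_map_add, Multiset.map_id', Multiset.map_const',
      Multiset.sum_replicate, smul_eq_mul] at hcard hsum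
    refine ⟨t, ⟨hcard, by subst hcard; omega, fun p hp => ?_⟩, rfl⟩
    have := hs' (p + 2) (Multiset.mem_map_of_mem _ hp)
    omega
  · rintro ⟨t, ⟨rfl, rfl, ht⟩, rfl⟩
    refine ⟨⟨Multiset.card_map _ _, ?_, ?_⟩, ?_⟩
    · simp only [Multiset.sum_map_add, Multiset.map_id', Multiset.map_const',
        Multiset.sum_replicate, smul_eq_mul]
      ring
    · simp only [Multiset.forall_mem_map_iff]
      exact fun p hp => ⟨by have := ht p hp; omega, by have := ht p hp; omega⟩
    · simp only [Multiset.mem_map, not_exists, not_and]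
      exact fun p hp => by have := ht p hp; omega

/-- The generating function of `stepMultisets r k`. -/
def stepSeries (r k : ℕ) : ℕ⟦X⟧ := mk fun n => #(stepMultisets r k n)

theorem stepSeries_zero (r : ℕ) : stepSeries r 0 = 1 := by
  ext n
  have h : stepMultisets r 0 n = if n = 0 then {0} else ∅ := by
    ext s
    rw [mem_stepMultisets, Multiset.card_eq_zero]
    split_ifs with hn
    · rw [mem_singleton]
      exact ⟨And.left, fun hs => ⟨hs, by simp [hs, hn], by simp [hs]⟩⟩
    · refine iff_of_false (fun ⟨hs, hsum, _⟩ => hn ?_) (notMem_empty s)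
      rw [← hsum, hs, Multiset.sum_zero]
  rw [stepSeries, coeff_mk, coeff_one, h]
  split_ifs <;> rfl

theorem stepSeries_succ (r k : ℕ) :
    stepSeries r (k + 1) = X ^ r * stepSeries r k + X ^ (2 * (k + 1)) * stepSeries r (k + 1) := by
  ext n
  rw [map_add, coeff_X_pow_mul', coeff_X_pow_mul']
  simp only [stepSeries, coeff_mk]
  rw [← card_filter_add_card_filter_not (fun s => r ∈ s)]
  congr 1
  · split_ifs with h
    · obtain ⟨n, rfl⟩ := Nat.exists_eq_add_of_le h
      rw [filter_mem_stepMultisets, Nat.add_sub_cancel_left,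
        card_image_of_injective _ fun _ _ => (Multiset.cons_inj_right r).1]
    · rw [card_filter_eq_zero_iff]
      intro s hs hr
      have := Multiset.le_sum_of_mem hr
      have := (mem_stepMultisets.1 hs).2.1
      omega
  · split_ifs with h
    · obtain ⟨n, rfl⟩ := Nat.exists_eq_add_of_le h
      rw [filter_notMem_stepMultisets, Nat.add_sub_cancel_left,
        card_image_of_injective _ (Multiset.map_injective (add_left_injective 2))]
    · rw [card_filter_eq_zero_iff]
      intro s hs hr
      obtain ⟨hcard, hsum, hs⟩ := mem_stepMultisets.1 hs
      have := s.card_nsmul_le_sum (a := 2) fun p hp => by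
        have := hs p hp
        have : p ≠ r := fun h => hr (h ▸ hp)
        omega
      rw [smul_eq_mul] at this
      omega

end StepSeries

section InvPochhammer

/-- The generating function `∏ i ∈ {1, …, k}, (1 - X ^ (2 * i))⁻¹`, realised as that of the
multisets of `k` even numbers. -/
def invPoch (k : ℕ) : ℕ⟦X⟧ := stepSeries 0 k

theorem invPoch_zero : invPoch 0 = 1 := stepSeries_zero 0

theorem invPoch_succ (k : ℕ) :
    invPoch (k + 1) = invPoch k + X ^ (2 * (k + 1)) * invPoch (k + 1) := by
  simpa only [invPoch, pow_zero, one_mul] using stepSeries_succ 0 k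

theorem invPoch_one_eq : invPoch 1 = 1 + X ^ 2 + X ^ 4 * invPoch 1 := by
  conv_lhs => rw [invPoch_succ, invPoch_succ, invPoch_zero]
  ring

theorem stepSeries_eq_X_pow_mul_invPoch (r k : ℕ) :
    stepSeries r k = X ^ (r * k) * invPoch k := by
  induction k with
  | zero => simp only [stepSeries_zero, invPoch_zero, mul_zero, pow_zero, mul_one]
  | succ k ih =>
    have hrec : X ^ (r * (k + 1)) * invPoch (k + 1) = X ^ r * stepSeries r k +
        X ^ (2 * (k + 1)) * (X ^ (r * (k + 1)) * invPoch (k + 1)) := by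
      rw [ih]
      conv_lhs => rw [invPoch_succ]
      ring
    have hk : 2 * (k + 1) ≠ 0 := by omega
    exact le_antisymm (le_of_eq_add_X_pow_mul hk (stepSeries_succ r k) hrec le_rfl)
      (le_of_eq_add_X_pow_mul hk hrec (stepSeries_succ r k) le_rfl)

theorem invPoch_mono : Monotone invPoch :=
  monotone_nat_of_le_succ fun k => by
    rw [invPoch_succ]
    exact le_self_add

theorem X_sq_mul_invPoch_succ_le (k : ℕ) : X ^ 2 * invPoch (k + 1) ≤ invPoch (k + 1) := by
  induction k with
  | zero =>
    conv_rhs => rw [invPoch_succ]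
    exact le_add_self
  | succ k ih =>
    refine le_of_eq_add_X_pow_mul (m := 2 * (k + 2)) (by omega) ?_ (invPoch_succ (k + 1)) ih
    conv_lhs => rw [invPoch_succ]
    ring

theorem X_pow_mul_invPoch_succ_le (j k : ℕ) :
    X ^ (2 * j) * invPoch (k + 1) ≤ invPoch (k + 1) := by
  induction j with
  | zero => rw [mul_zero, pow_zero, one_mul]
  | succ j ih =>
    calc X ^ (2 * (j + 1)) * invPoch (k + 1) = X ^ 2 * (X ^ (2 * j) * invPoch (k + 1)) := by ring
      _ ≤ X ^ 2 * invPoch (k + 1) := by gcongr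
      _ ≤ invPoch (k + 1) := X_sq_mul_invPoch_succ_le k

theorem X_pow_le_invPoch_succ (j k : ℕ) : X ^ (2 * j) ≤ invPoch (k + 1) :=
  calc X ^ (2 * j) = X ^ (2 * j) * invPoch 0 := by rw [invPoch_zero, mul_one]
    _ ≤ X ^ (2 * j) * invPoch (k + 1) := by gcongr; exact invPoch_mono (Nat.zero_le _)
    _ ≤ invPoch (k + 1) := X_pow_mul_invPoch_succ_le j k

end InvPochhammer

section CountSeries

theorem filter_odd_add_filter_even (s : Multiset ℕ) :
    s.filter (· % 2 = 1) + s.filter (· % 2 = 0) = s := by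
  rw [← Multiset.filter_congr fun p _ => Nat.mod_two_ne_one (n := p)]
  exact Multiset.filter_add_not _ s

theorem oddCount_add_evenCount_le {n : ℕ} (l : n.Partition) : l.oddCount + l.evenCount ≤ n := by
  have hcard := l.parts.card_nsmul_le_sum (a := 1) fun _ hp => l.parts_pos hp
  rw [l.parts_sum, smul_eq_mul, mul_one] at hcard
  rwa [Nat.Partition.oddCount, Nat.Partition.evenCount, ← Multiset.card_add,
    filter_odd_add_filter_even]

/-- The partitions of `n` with all parts at least `2`. -/
def nonunitPartitions (n : ℕ) : Finset n.Partition := {l | ∀ p ∈ l.parts, 2 ≤ p}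

/-- The generating function of the partitions with all parts at least `2`, exactly `a` odd parts
and exactly `b` even parts. -/
def countSeries (a b : ℕ) : ℕ⟦X⟧ :=
  mk fun n => #{l ∈ nonunitPartitions n | l.oddCount = a ∧ l.evenCount = b}

theorem countSeries_eq_mul_stepSeries (a b : ℕ) :
    countSeries a b = stepSeries 3 a * stepSeries 2 b := by
  ext n
  simp only [countSeries, stepSeries, coeff_mul, coeff_mk, ← card_product, ← card_sigma]
  refine card_bij (fun l _ =>
    ⟨((l.parts.filter (· % 2 = 1)).sum, (l.parts.filter (· % 2 = 0)).sum),
      l.parts.filter (· % 2 = 1), l.parts.filter (· % 2 = 0)⟩) ?_ ?_ ?_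
  · intro l hl
    simp only [nonunitPartitions, mem_filter, mem_univ, true_and] at hl
    simp only [mem_sigma, mem_product, HasAntidiagonal.mem_antidiagonal, mem_stepMultisets,
      ← Multiset.sum_add, filter_odd_add_filter_even, l.parts_sum, Multiset.mem_filter, true_and]
    obtain ⟨htwo, hodd, heven⟩ := hl
    refine ⟨⟨hodd, fun p hp => ?_⟩, heven, fun p hp => ?_⟩ <;>
    · have := htwo p hp.1
      omega
  · intro l _ l' _ h
    simp only [Sigma.mk.injEq, Prod.mk.injEq, heq_eq_eq] at h
    rw [Nat.Partition.ext_iff, ← filter_odd_add_filter_even l.parts, h.2.1, h.2.2,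
      filter_odd_add_filter_even]
  · rintro ⟨⟨i, j⟩, s, t⟩ h
    simp only [mem_sigma, mem_product, HasAntidiagonal.mem_antidiagonal, mem_stepMultisets] at h
    obtain ⟨rfl, ⟨rfl, rfl, hs⟩, rfl, rfl, ht⟩ := h
    have hodd : (s + t).filter (· % 2 = 1) = s :=
      filter_add_eq_left _ (fun p hp => (hs p hp).2)
        fun p hp => by have := (ht p hp).2; omega
    have heven : (s + t).filter (· % 2 = 0) = t := by
      rw [add_comm]
      exact filter_add_eq_left _ (fun p hp => (ht p hp).2)
        fun p hp => by have := (hs p hp).2; omega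
    have htwo : ∀ p ∈ s + t, 2 ≤ p := fun p hp => by
      rcases Multiset.mem_add.1 hp with hp | hp
      · exact le_trans (by omega) (hs p hp).1
      · exact (ht p hp).1
    refine ⟨⟨s + t, fun {p} hp => zero_lt_two.trans_le (htwo p hp), s.sum_add t⟩, ?_, ?_⟩
    · exact mem_filter.2 ⟨mem_filter.2 ⟨mem_univ _, htwo⟩, congrArg Multiset.card hodd,
        congrArg Multiset.card heven⟩
    · simp only [hodd, heven]

theorem countSeries_eq (a b : ℕ) :
    countSeries a b = X ^ (3 * a + 2 * b) * (invPoch a * invPoch b) := by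
  rw [countSeries_eq_mul_stepSeries, stepSeries_eq_X_pow_mul_invPoch,
    stepSeries_eq_X_pow_mul_invPoch]
  ring

end CountSeries

section Comparison

theorem countSeries_le_countSeries {a b a' b' : ℕ} (hw : 3 * a + 2 * b = 3 * a' + 2 * b')
    (ha : b ≤ a') (hb : a ≤ b') : countSeries a b ≤ countSeries a' b' := by
  rw [countSeries_eq, countSeries_eq, hw, mul_comm (invPoch a)]
  gcongr <;> exact invPoch_mono ‹_›

theorem countSeries_add_three_add_two_le (k : ℕ) :
    countSeries (k + 3) (k + 2) ≤ countSeries (k + 1) (k + 5) + countSeries (k + 3) (k + 4) := by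
  have hfst : invPoch (k + 3) ≤ invPoch (k + 5) := invPoch_mono (by omega)
  have hsnd : X ^ (2 * k) * invPoch (k + 2) ≤ invPoch (k + 4) :=
    (X_pow_mul_invPoch_succ_le k (k + 1)).trans (invPoch_mono (by omega))
  calc countSeries (k + 3) (k + 2)
    _ = X ^ (5 * k + 13) * (invPoch (k + 1) * invPoch (k + 3)) +
        X ^ (5 * k + 17) * (invPoch (k + 3) * (X ^ (2 * k) * invPoch (k + 2))) := by
      rw [countSeries_eq]
      conv_lhs => rw [invPoch_succ (k + 1)]
      ring
    _ ≤ X ^ (5 * k + 13) * (invPoch (k + 1) * invPoch (k + 5)) +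
        X ^ (5 * k + 17) * (invPoch (k + 3) * invPoch (k + 4)) := by gcongr
    _ = countSeries (k + 1) (k + 5) + countSeries (k + 3) (k + 4) := by
      rw [countSeries_eq, countSeries_eq]
      ring

theorem countSeries_two_one_le :
    countSeries 2 1 ≤ countSeries 0 2 + countSeries 0 4 + countSeries 2 3 := by
  have hshift : X ^ 6 * invPoch 2 ≤ invPoch 2 := X_pow_mul_invPoch_succ_le 3 1
  have hfour : invPoch 2 ≤ invPoch 4 := invPoch_mono (by omega)
  have hone : invPoch 1 ≤ invPoch 3 := invPoch_mono (by omega)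
  calc countSeries 2 1
    _ = X ^ 4 * (X ^ 6 * invPoch 2) + X ^ 8 * invPoch 2 +
        X ^ 12 * (invPoch 2 * invPoch 1) := by
      rw [countSeries_eq]
      conv_lhs => rw [invPoch_one_eq]
      ring
    _ ≤ X ^ 4 * invPoch 2 + X ^ 8 * invPoch 4 + X ^ 12 * (invPoch 2 * invPoch 3) := by gcongr
    _ = countSeries 0 2 + countSeries 0 4 + countSeries 2 3 := by
      simp only [countSeries_eq, invPoch_zero]
      ring

theorem countSeries_one_zero_add_le :
    countSeries 1 0 + X ^ 9 * invPoch 1 ≤ countSeries 1 2 + (X ^ 3 + X ^ 5) := by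
  have htwo : 1 + X ^ 2 ≤ invPoch 2 :=
    calc 1 + X ^ 2 ≤ 1 + X ^ 2 + X ^ 4 * invPoch 1 := le_self_add
      _ = invPoch 1 := invPoch_one_eq.symm
      _ ≤ invPoch 2 := invPoch_mono one_le_two
  calc countSeries 1 0 + X ^ 9 * invPoch 1
    _ = X ^ 7 * (invPoch 1 * (1 + X ^ 2)) + (X ^ 3 + X ^ 5) := by
      have hthree : countSeries 1 0 = X ^ 3 + X ^ 5 + X ^ 7 * invPoch 1 := by
        rw [countSeries_eq, invPoch_zero]
        conv_lhs => rw [invPoch_one_eq]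
        ring
      rw [hthree]
      ring
    _ ≤ X ^ 7 * (invPoch 1 * invPoch 2) + (X ^ 3 + X ^ 5) := by gcongr
    _ = countSeries 1 2 + (X ^ 3 + X ^ 5) := by rw [countSeries_eq]

theorem X_pow_le_mul_invPoch_one {n : ℕ} (hn : 7 < n) :
    X ^ n ≤ X ^ 2 * invPoch 1 + X ^ 9 * invPoch 1 := by
  obtain ⟨j, rfl | rfl⟩ : ∃ j, n = 2 + 2 * j ∨ n = 9 + 2 * j := by
    rcases n.even_or_odd' with ⟨j, rfl | rfl⟩
    · exact ⟨j - 1, by omega⟩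
    · exact ⟨j - 4, by omega⟩
  · calc X ^ (2 + 2 * j) = X ^ 2 * X ^ (2 * j) := pow_add _ _ _
      _ ≤ X ^ 2 * invPoch 1 := by gcongr; exact X_pow_le_invPoch_succ j 0
      _ ≤ _ := le_self_add
  · calc X ^ (9 + 2 * j) = X ^ 9 * X ^ (2 * j) := pow_add _ _ _
      _ ≤ X ^ 9 * invPoch 1 := by gcongr; exact X_pow_le_invPoch_succ j 0
      _ ≤ _ := le_add_self

end Comparison

section Excess

/-- The generating function of the partitions with all parts at least `2` and exactly `d` more odd
than even parts, truncated to fewer than `K` even parts so that it is a finite sum. -/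
def oddExcess (K d : ℕ) : ℕ⟦X⟧ := ∑ k ∈ range K, countSeries (k + d) k

/-- The generating function of the partitions with all parts at least `2` and exactly `d` more even
than odd parts, truncated to fewer than `K` odd parts so that it is a finite sum. -/
def evenExcess (K d : ℕ) : ℕ⟦X⟧ := ∑ k ∈ range K, countSeries k (k + d)

theorem evenExcess_mono_left {K K' : ℕ} (hK : K ≤ K') (d : ℕ) :
    evenExcess K d ≤ evenExcess K' d :=
  sum_le_sum_of_subset (range_mono hK)

theorem oddExcess_two_mul_le {K K' : ℕ} (hK : K ≤ K') (e : ℕ) :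
    oddExcess K (2 * e) ≤ evenExcess K' (3 * e) :=
  calc oddExcess K (2 * e) ≤ evenExcess K (3 * e) :=
        sum_le_sum fun k _ => countSeries_le_countSeries (by ring) le_rfl (by omega)
    _ ≤ evenExcess K' (3 * e) := evenExcess_mono_left hK _

theorem oddExcess_two_mul_add_three_le {K K' : ℕ} (hK : K < K') (e : ℕ) :
    oddExcess K (2 * e + 3) + countSeries 0 (3 * e + 2) ≤ evenExcess K' (3 * e + 2) := by
  refine le_trans ?_ (evenExcess_mono_left hK _)
  rw [evenExcess, sum_range_succ', zero_add]
  gcongr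
  exact sum_le_sum fun k _ => countSeries_le_countSeries (by ring) (by omega) (by omega)

theorem oddExcess_one_add_le (K : ℕ) :
    oddExcess (K + 2) 1 + (X ^ 2 * invPoch 1 + X ^ 9 * invPoch 1) ≤
      evenExcess (K + 3) 1 + evenExcess (K + 3) 4 + countSeries 0 2 + (X ^ 3 + X ^ 5) := by
  have hfour : countSeries 0 4 + ∑ k ∈ range K, countSeries (k + 1) (k + 5) ≤
      evenExcess (K + 3) 4 :=
    calc countSeries 0 4 + ∑ k ∈ range K, countSeries (k + 1) (k + 5) = evenExcess (K + 1) 4 := by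
          rw [evenExcess, sum_range_succ', add_comm]
      _ ≤ evenExcess (K + 3) 4 := evenExcess_mono_left (by omega) _
  calc oddExcess (K + 2) 1 + (X ^ 2 * invPoch 1 + X ^ 9 * invPoch 1)
    _ = ∑ k ∈ range K, countSeries (k + 3) (k + 2) + countSeries 2 1 +
        (countSeries 1 0 + X ^ 9 * invPoch 1) + X ^ 2 * invPoch 1 := by
      simp only [oddExcess, sum_range_succ']
      ring
    _ ≤ ∑ k ∈ range K, (countSeries (k + 1) (k + 5) + countSeries (k + 3) (k + 4)) +
        (countSeries 0 2 + countSeries 0 4 + countSeries 2 3) +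
        (countSeries 1 2 + (X ^ 3 + X ^ 5)) + X ^ 2 * invPoch 1 := by
      refine add_le_add_left (add_le_add (add_le_add (sum_le_sum fun k _ => ?_) ?_) ?_) _
      exacts [countSeries_add_three_add_two_le k, countSeries_two_one_le,
        countSeries_one_zero_add_le]
    _ = evenExcess (K + 3) 1 + (countSeries 0 4 + ∑ k ∈ range K, countSeries (k + 1) (k + 5)) +
        countSeries 0 2 + (X ^ 3 + X ^ 5) := by
      have hone : countSeries 0 1 = X ^ 2 * invPoch 1 := by
        rw [countSeries_eq, invPoch_zero, one_mul]
      simp only [evenExcess, sum_range_succ', sum_add_distrib, zero_add, hone]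
      ring
    _ ≤ evenExcess (K + 3) 1 + evenExcess (K + 3) 4 + countSeries 0 2 + (X ^ 3 + X ^ 5) := by
      gcongr

theorem oddExcess_pair_add_le {K K' : ℕ} (hK : K < K') (e : ℕ) :
    oddExcess K (2 * e + 2) + oddExcess K (2 * e + 3) + countSeries 0 (3 * e + 2) ≤
      evenExcess K' (3 * e + 2) + evenExcess K' (3 * e + 3) :=
  calc oddExcess K (2 * e + 2) + oddExcess K (2 * e + 3) + countSeries 0 (3 * e + 2)
    _ = oddExcess K (2 * e + 3) + countSeries 0 (3 * e + 2) + oddExcess K (2 * (e + 1)) := by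
      ring_nf
    _ ≤ evenExcess K' (3 * e + 2) + evenExcess K' (3 * (e + 1)) :=
      add_le_add (oddExcess_two_mul_add_three_le hK e) (oddExcess_two_mul_le hK.le _)

theorem sum_oddExcess_pair_add_le {K K' : ℕ} (hK : K < K') (D : ℕ) :
    ∑ e ∈ range (D + 1), (oddExcess K (2 * e + 2) + oddExcess K (2 * e + 3)) +
        countSeries 0 2 + evenExcess K' 4 ≤
      ∑ e ∈ range (D + 1),
        (evenExcess K' (3 * e + 2) + evenExcess K' (3 * e + 3) + evenExcess K' (3 * e + 4)) := by
  have htwo : countSeries 0 2 ≤ ∑ e ∈ range (D + 1), countSeries 0 (3 * e + 2) :=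
    single_le_sum_of_canonicallyOrdered (i := 0) (f := fun e => countSeries 0 (3 * e + 2))
      (mem_range.2 D.succ_pos)
  have hfour : evenExcess K' 4 ≤ ∑ e ∈ range (D + 1), evenExcess K' (3 * e + 4) :=
    single_le_sum_of_canonicallyOrdered (i := 0) (f := fun e => evenExcess K' (3 * e + 4))
      (mem_range.2 D.succ_pos)
  calc _ ≤ ∑ e ∈ range (D + 1), (oddExcess K (2 * e + 2) + oddExcess K (2 * e + 3)) +
        ∑ e ∈ range (D + 1), countSeries 0 (3 * e + 2) +
        ∑ e ∈ range (D + 1), evenExcess K' (3 * e + 4) :=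
      add_le_add (add_le_add_right htwo _) hfour
    _ = ∑ e ∈ range (D + 1), (oddExcess K (2 * e + 2) + oddExcess K (2 * e + 3) +
        countSeries 0 (3 * e + 2) + evenExcess K' (3 * e + 4)) := by
      rw [← sum_add_distrib, ← sum_add_distrib]
    _ ≤ _ := sum_le_sum fun e _ => add_le_add_left (oddExcess_pair_add_le hK e) _

theorem sum_oddExcess_add_X_pow_le {n : ℕ} (hn : 7 < n) (K D : ℕ) :
    ∑ d ∈ range (2 * (D + 1) + 1), oddExcess (K + 2) (d + 1) + X ^ n ≤
      ∑ d ∈ range (3 * (D + 1) + 1), evenExcess (K + 3) (d + 1) + (X ^ 3 + X ^ 5) := by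
  rw [sum_range_two_mul_add_one (fun d => oddExcess (K + 2) (d + 1)),
    sum_range_three_mul_add_one (fun d => evenExcess (K + 3) (d + 1))]
  set S := ∑ e ∈ range (D + 1), (oddExcess (K + 2) (2 * e + 2) + oddExcess (K + 2) (2 * e + 3))
  set T := ∑ e ∈ range (D + 1), (evenExcess (K + 3) (3 * e + 2) +
    evenExcess (K + 3) (3 * e + 3) + evenExcess (K + 3) (3 * e + 4))
  have hST : S + countSeries 0 2 + evenExcess (K + 3) 4 ≤ T :=
    sum_oddExcess_pair_add_le (Nat.lt_succ_self _) D
  have hone := (add_le_add_right (X_pow_le_mul_invPoch_one hn) _).trans (oddExcess_one_add_le K)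
  calc oddExcess (K + 2) 1 + S + X ^ n
    _ = oddExcess (K + 2) 1 + X ^ n + S := add_right_comm _ _ _
    _ ≤ evenExcess (K + 3) 1 + evenExcess (K + 3) 4 + countSeries 0 2 + (X ^ 3 + X ^ 5) + S :=
      add_le_add_left hone S
    _ = evenExcess (K + 3) 1 + (S + countSeries 0 2 + evenExcess (K + 3) 4) + (X ^ 3 + X ^ 5) := by
      ring
    _ ≤ evenExcess (K + 3) 1 + T + (X ^ 3 + X ^ 5) := by gcongr

end Excess

section Counting

theorem natCard_evenCount_lt_oddCount {n K D : ℕ} (hK : n < K) (hD : n ≤ D) :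
    Nat.card {l : n.Partition // (∀ p ∈ l.parts, 2 ≤ p) ∧ l.evenCount < l.oddCount} =
      coeff n (∑ d ∈ range D, oddExcess K (d + 1)) := by
  rw [Nat.card_eq_fintype_card, Fintype.card_subtype, ← filter_filter,
    card_filter_lt_eq_sum (K := K) (D := D)]
  · simp only [oddExcess, countSeries, map_sum, coeff_mk, nonunitPartitions, and_comm]
  all_goals
    intro l _
    have := oddCount_add_evenCount_le l
    omega

theorem natCard_oddCount_lt_evenCount {n K D : ℕ} (hK : n < K) (hD : n ≤ D) :
    Nat.card {l : n.Partition // (∀ p ∈ l.parts, 2 ≤ p) ∧ l.oddCount < l.evenCount} =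
      coeff n (∑ d ∈ range D, evenExcess K (d + 1)) := by
  rw [Nat.card_eq_fintype_card, Fintype.card_subtype, ← filter_filter,
    card_filter_lt_eq_sum (K := K) (D := D)]
  · simp only [evenExcess, countSeries, map_sum, coeff_mk, nonunitPartitions]
  all_goals
    intro l _
    have := oddCount_add_evenCount_le l
    omega

end Counting

end PartsParity

/-- For every integer `n > 7`, the number of partitions of `n` with all parts at least `2`
and more odd parts than even parts is strictly less than the number of partitions of `n`
with all parts at least `2` and more even parts than odd parts. -/
theorem qo_lt_qe (n : ℕ) (hn : 7 < n) :
    Nat.card {l : n.Partition // (∀ p ∈ l.parts, 2 ≤ p) ∧ l.evenCount < l.oddCount} <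
      Nat.card {l : n.Partition // (∀ p ∈ l.parts, 2 ≤ p) ∧ l.oddCount < l.evenCount} := by
  have hle := PartsParity.coeff_mono n (PartsParity.sum_oddExcess_add_X_pow_le hn n n)
  rw [map_add, map_add, map_add, PowerSeries.coeff_X_pow_self, PowerSeries.coeff_X_pow,
    PowerSeries.coeff_X_pow, if_neg (by omega), if_neg (by omega),
    ← PartsParity.natCard_evenCount_lt_oddCount (by omega) (by omega),
    ← PartsParity.natCard_oddCount_lt_evenCount (by omega) (by omega)] at hle
  omega
end
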